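/- arXiv:1512.05056 — 5 statements merged into one kernel-verified Lean document; each statement's English description precedes it below -/
import Mathlib

section
/- Uniqueness of solutions to the hydrodynamic PDE: let λ be a nonnegative locally integrable function on [0,∞), let g be a nonnegative locally integrable probability density on [0,∞) with ∫₀^∞ g(x)dx = 1 and ∫₀^∞ x g(x)dx = 1, let Ḡ(x) = ∫ₓ^∞ g(y)dy, and suppose there is a constant H < ∞ with g(x) ≤ H·Ḡ(x) for all x ≥ 0. Let Z⁰_ℓ (ℓ ≥ 1) be continuously differentiable functions on [0,∞) with bounded derivative and |Z⁰_ℓ| ≤ 1. If (Z_ℓ; ℓ ≥ 1) and (Z̃_ℓ; ℓ ≥ 1) are both solutions of the hydrodynamic PDE associated to (λ, (Z⁰_ℓ)), then Z_ℓ(t,r) = Z̃_ℓ(t,r) for every ℓ ≥ 1 and all t, r ≥ 0. -/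
open MeasureTheory Set

/-- A family `(Z ℓ; ℓ ≥ 1)` of functions on `[0,∞) × [0,∞)` solves the hydrodynamic PDE
associated to the arrival rate `lam`, complementary service distribution `Gbar` and
initial data `(Z0 ℓ; ℓ ≥ 1)`. Here `∂_r Z ℓ (u, 0)` is formalized as
`derivWithin (Z ℓ u) (Set.Ici 0) 0`, the derivative of `r ↦ Z ℓ u r` at `r = 0`
(from within the domain `[0,∞)`). -/
structure IsHydroSol (lam Gbar : ℝ → ℝ) (Z0 : ℕ → ℝ → ℝ) (Z : ℕ → ℝ → ℝ → ℝ) : Prop where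
  regular : ∀ ℓ ≥ 1, ∀ t ≥ (0:ℝ),
    ContDiffOn ℝ 1 (Z ℓ t) (Ici 0) ∧
    (∃ M : ℝ, ∀ r ≥ (0:ℝ), |derivWithin (Z ℓ t) (Ici 0) r| ≤ M) ∧
    (∀ r ≥ (0:ℝ), |Z ℓ t r| ≤ 1)
  meas : ∀ ℓ ≥ 1, ∀ r ≥ (0:ℝ), Measurable fun t => Z ℓ t r
  eq_one : ∀ t ≥ (0:ℝ), ∀ r ≥ (0:ℝ),
    Z 1 t r = Z0 1 (t + r)
      - (∫ u in (0:ℝ)..t, Gbar (t + r - u) * derivWithin (Z 2 u) (Ici 0) 0)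
      + ∫ u in (0:ℝ)..t, lam u * Gbar (t + r - u) * (1 - (Z 1 u 0) ^ 2)
  bc_one : ∀ t ≥ (0:ℝ),
    Z 1 t 0 = Z0 1 0
      + (∫ u in (0:ℝ)..t,
          (derivWithin (Z 1 u) (Ici 0) 0 - derivWithin (Z 2 u) (Ici 0) 0))
      + ∫ u in (0:ℝ)..t, lam u * (1 - (Z 1 u 0) ^ 2)
  eq_ell : ∀ ℓ ≥ 2, ∀ t ≥ (0:ℝ), ∀ r ≥ (0:ℝ),
    Z ℓ t r = Z0 ℓ (t + r)
      - (∫ u in (0:ℝ)..t, Gbar (t + r - u) * derivWithin (Z (ℓ + 1) u) (Ici 0) 0)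
      + ∫ u in (0:ℝ)..t, lam u * (Z (ℓ - 1) u 0 + Z ℓ u 0) *
          (Z (ℓ - 1) u (t + r - u) - Z ℓ u (t + r - u))
  bc_ell : ∀ ℓ ≥ 2, ∀ t ≥ (0:ℝ),
    Z ℓ t 0 = Z0 ℓ 0
      + (∫ u in (0:ℝ)..t,
          (derivWithin (Z ℓ u) (Ici 0) 0 - derivWithin (Z (ℓ + 1) u) (Ici 0) 0))
      + ∫ u in (0:ℝ)..t, lam u * ((Z (ℓ - 1) u 0) ^ 2 - (Z ℓ u 0) ^ 2)

/-!
Let `Δ_ℓ` be the difference of two solutions, `e_ℓ(u) = ∂ᵣΔ_ℓ(u, 0)` and `E_ℓ(t) = ∫₀ᵗ e_ℓ`. Then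
`Δ_ℓ(t, r) = ∫₀ᵗ w_ℓ(u, t + r - u) du`, where `w_ℓ(u, r)` is `λ(u)` times the difference of the
nonlinear terms minus `Ḡ(r) e_{ℓ+1}(u)`. Two identities remove the uncontrolled slopes. Transport
gives `E_ℓ(t) = Δ_ℓ(t, 0) - ∫₀ᵗ w_ℓ(u, 0) du`, and integration by parts against the Lipschitz
function `Ḡ` gives `|Δ_ℓ(t, r) + Ḡ(r) E_{ℓ+1}(t)| ≲ ∫₀ᵗ (1 + λ(u)) φ(u) du` whenever `φ` bounds
all `|E_ℓ|` and `|Δ_ℓ|`. At `r = 0` these combine to the same bound for `E_ℓ` alone. Since level `ℓ`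
involves level `ℓ + 1`, Grönwall's inequality is applied to all levels at once.

The slopes need not be integrable in time, and a divergent slope integral has the value `0`, so the
equations change form at a time when a slope stops being integrable. If this does not happen to
level `k` then it does not happen to any level below `k`, by a Grönwall bound on their Lipschitz
constants, so that after every time there is an interval on which it happens to no level. Real
induction on time concludes.
-/

theorem le_two_mul_of_forall_le_add_half {ι : Type*} {f : ι → ℝ} {C : ℝ} (hC : 0 ≤ C)
    (hf : ∃ M, ∀ i, f i ≤ M)
    (h : ∀ N ≥ 0, (∀ i, f i ≤ N) → ∀ i, f i ≤ C + N / 2) (i : ι) : f i ≤ 2 * C := by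
  obtain ⟨M, hM⟩ := hf
  have hbdd : BddAbove (range f) := ⟨M, forall_mem_range.2 hM⟩
  set S := max (⨆ j, f j) 0
  have hS : ∀ j, f j ≤ S := fun j => (le_ciSup hbdd j).trans (le_max_left _ _)
  have hS₀ : 0 ≤ S := le_max_right _ _
  have : Nonempty ι := ⟨i⟩
  have hle : S ≤ C + S / 2 := max_le (ciSup_le (h S hS₀ hS)) (by positivity)
  linarith [hS i]

section Gronwall

variable {k : ℝ → ℝ} {a b s t C : ℝ}

theorem intervalIntegrable_of_mem_Icc (hk : IntervalIntegrable k volume a b) (hs : s ∈ Icc a b)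
    (ht : t ∈ Icc a b) : IntervalIntegrable k volume s t := by
  refine hk.mono_set ?_
  rw [uIcc_of_le (hs.1.trans hs.2)]
  exact uIcc_subset_Icc hs ht

theorem monotoneOn_intervalIntegral (hk : IntervalIntegrable k volume a b)
    (hk₀ : ∀ u ∈ Icc a b, 0 ≤ k u) : MonotoneOn (fun t => ∫ u in a..t, k u) (Icc a b) := by
  intro s hs t ht hst
  exact intervalIntegral.integral_mono_interval le_rfl hs.1 hst
    ((ae_restrict_mem measurableSet_Ioc).mono fun u hu => hk₀ u ⟨hu.1.le, hu.2.trans ht.2⟩)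
    (intervalIntegrable_of_mem_Icc hk ⟨le_rfl, ht.1.trans ht.2⟩ ht)

theorem continuousOn_intervalIntegral (hk : IntervalIntegrable k volume a b) :
    ContinuousOn (fun t => ∫ u in a..t, k u) (Icc a b) :=
  (intervalIntegral.continuousOn_primitive_interval' hk left_mem_uIcc).mono Icc_subset_uIcc

theorem integral_mul_exp_le (hat : a ≤ t)
    (hk : IntervalIntegrable k volume a t) (hk₀ : ∀ u ∈ Icc a t, 0 ≤ k u) :
    ∫ u in a..t, k u * Real.exp (2 * ∫ s in a..u, k s) ≤
      (Real.exp (2 * ∫ s in a..t, k s) - 1) / 2 := by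
  set w : ℝ → ℝ := fun u => Real.exp (2 * ∫ s in a..u, k s)
  have hmono : MonotoneOn w (uIcc a t) := by
    rw [uIcc_of_le hat]
    exact fun u hu v hv huv => Real.exp_le_exp.2
      (mul_le_mul_of_nonneg_left (monotoneOn_intervalIntegral hk hk₀ hu hv huv) zero_le_two)
  have hderiv : ∫ u in a..t, k u * w u = ∫ u in a..t, 2⁻¹ * deriv w u := by
    refine intervalIntegral.integral_congr_ae ?_
    filter_upwards [hk.ae_hasDerivAt_integral] with u hu hut
    rw [((hu (uIoc_subset_uIcc hut) a left_mem_uIcc).const_mul 2).exp.deriv]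
    ring
  have hle := hmono.intervalIntegral_deriv_mem_uIcc
  have hw : w a = 1 := by simp [w]
  rw [uIcc_of_le (sub_nonneg.2 (hmono left_mem_uIcc right_mem_uIcc hat)), hw] at hle
  rw [hderiv, intervalIntegral.integral_const_mul]
  linarith [hle.2]

/- Dividing by `exp (2 ∫ k)` turns the hypothesis into a contraction with factor `1 / 2`. -/
theorem forall_le_exp_of_forall_le_integral {ι : Type*} {f : ι → ℝ → ℝ}
    (hk : IntervalIntegrable k volume a b) (hk₀ : ∀ u ∈ Icc a b, 0 ≤ k u) (hC : 0 ≤ C)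
    (hf : ∃ M, ∀ i, ∀ t ∈ Icc a b, f i t ≤ M)
    (h : ∀ φ : ℝ → ℝ, ContinuousOn φ (Icc a b) → (∀ u ∈ Icc a b, 0 ≤ φ u) →
      (∀ j, ∀ u ∈ Icc a b, f j u ≤ φ u) →
      ∀ i, ∀ t ∈ Icc a b, f i t ≤ C + ∫ u in a..t, k u * φ u)
    (i : ι) (ht : t ∈ Icc a b) : f i t ≤ 2 * C * Real.exp (2 * ∫ u in a..t, k u) := by
  obtain ⟨M, hM⟩ := hf
  set w : ℝ → ℝ := fun u => Real.exp (2 * ∫ s in a..u, k s)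
  have hw : ∀ u ∈ Icc a b, 1 ≤ w u := fun u hu => Real.one_le_exp <|
    mul_nonneg zero_le_two <| intervalIntegral.integral_nonneg hu.1
      fun v hv => hk₀ v ⟨hv.1, hv.2.trans hu.2⟩
  have hw₀ : ∀ u, 0 < w u := fun u => Real.exp_pos _
  suffices H : ∀ p : ι × Icc a b, f p.1 p.2 / w p.2 ≤ 2 * C from
    (div_le_iff₀ (hw₀ t)).1 (H (i, ⟨t, ht⟩))
  refine le_two_mul_of_forall_le_add_half hC ⟨|M|, ?_⟩ ?_
  · rintro ⟨j, u, hu⟩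
    rw [div_le_iff₀ (hw₀ u)]
    exact (hM j u hu).trans <| (le_abs_self M).trans <|
      le_mul_of_one_le_right (abs_nonneg M) (hw u hu)
  · rintro N hN hle ⟨j, u, hu⟩
    have hφ := h (fun v => N * w v)
      (((continuousOn_intervalIntegral hk).const_mul 2).rexp.const_mul N)
      (fun v _ => mul_nonneg hN (hw₀ v).le)
      (fun l v hv => (div_le_iff₀ (hw₀ v)).1 (hle (l, ⟨v, hv⟩))) j u hu
    have hint : ∫ v in a..u, k v * (N * w v) ≤ N * ((w u - 1) / 2) := by
      simp_rw [mul_left_comm, intervalIntegral.integral_const_mul]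
      exact mul_le_mul_of_nonneg_left (integral_mul_exp_le hu.1
        (intervalIntegrable_of_mem_Icc hk ⟨le_rfl, hu.1.trans hu.2⟩ hu)
        fun v hv => hk₀ v ⟨hv.1, hv.2.trans hu.2⟩) hN
    rw [div_le_iff₀ (hw₀ u)]
    nlinarith [hw u hu]

end Gronwall

theorem real_induction_Icc {Q : ℝ → Prop} {s T : ℝ}
    (hclosed : ∀ a ∈ Icc s T, (∀ u ∈ Ico s a, Q u) → Q a)
    (hopen : ∀ a ∈ Ico s T, (∀ u ∈ Icc s a, Q u) → ∃ b > a, ∀ u ∈ Ioc a b, Q u)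
    {t : ℝ} (ht : t ∈ Icc s T) : Q t := by
  set S : Set ℝ := {a | ∀ u ∈ Icc s a, Q u}
  have hsT : s ≤ T := ht.1.trans ht.2
  have hS : IsClosed (S ∩ Icc s T) := by
    refine isClosed_of_closure_subset fun a ha => ?_
    have haI : a ∈ Icc s T := closure_minimal inter_subset_right isClosed_Icc ha
    have hlt : ∀ u ∈ Ico s a, Q u := fun u hu => by
      obtain ⟨v, hv, hvS, -⟩ := mem_closure_iff.1 ha (Ioi u) isOpen_Ioi hu.2
      exact hvS u ⟨hu.1, le_of_lt hv⟩
    refine ⟨fun u hu => ?_, haI⟩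
    rcases hu.2.eq_or_lt with rfl | hua
    · exact hclosed u haI hlt
    · exact hlt u ⟨hu.1, hua⟩
  have hs : s ∈ S := fun u hu => by
    obtain rfl : u = s := le_antisymm hu.2 hu.1
    exact hclosed u ⟨le_rfl, hsT⟩ fun v hv => absurd hv.2 (not_lt.2 hv.1)
  refine hS.Icc_subset_of_forall_exists_gt hs (fun a ha y hy => ?_) ht t ⟨ht.1, le_rfl⟩
  obtain ⟨b, hab, hb⟩ := hopen a ha.2 ha.1
  refine ⟨min b y, fun u hu => ?_, lt_min hab hy, min_le_right _ _⟩
  rcases le_or_gt u a with hua | hau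
  · exact ha.1 u ⟨hu.1, hua⟩
  · exact hb u ⟨hau, hu.2.trans (min_le_left _ _)⟩

theorem abs_integral_mul_sub_mul_integral_le {g e φ : ℝ → ℝ} {K : NNReal} {a t : ℝ} (hat : a ≤ t)
    (hg : LipschitzOnWith K g (Icc a t)) (he : IntervalIntegrable e volume a t)
    (hφ : IntervalIntegrable φ volume a t) (h : ∀ s ∈ Icc a t, |∫ u in a..s, e u| ≤ φ s) :
    |(∫ u in a..t, g u * e u) - g t * ∫ u in a..t, e u| ≤ K * ∫ u in a..t, φ u := by
  set E : ℝ → ℝ := fun s => ∫ u in a..s, e u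
  have hg_ac : AbsolutelyContinuousOnInterval g a t :=
    (uIcc_of_le hat ▸ hg : LipschitzOnWith K g (uIcc a t)).absolutelyContinuousOnInterval
  have hE_ac : AbsolutelyContinuousOnInterval E a t :=
    he.absolutelyContinuousOnInterval_intervalIntegral left_mem_uIcc
  have hderiv : ∫ u in a..t, g u * e u = ∫ u in a..t, g u * deriv E u := by
    refine intervalIntegral.integral_congr_ae ?_
    filter_upwards [he.ae_hasDerivAt_integral] with u hu hut
    rw [(hu (uIoc_subset_uIcc hut) a left_mem_uIcc).deriv]
  have hparts : (∫ u in a..t, g u * e u) - g t * E t = -∫ u in a..t, deriv g u * E u := by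
    rw [hderiv, hg_ac.integral_mul_deriv_eq_deriv_mul hE_ac]
    simp [E]
  rw [hparts, abs_neg, ← intervalIntegral.integral_const_mul, ← Real.norm_eq_abs]
  refine intervalIntegral.norm_integral_le_of_norm_le hat ?_ (hφ.const_mul _)
  filter_upwards [compl_mem_ae_iff.2 (measure_singleton t)] with u hut hu
  have hnhds : Icc a t ∈ nhds u := Icc_mem_nhds hu.1 (lt_of_le_of_ne hu.2 hut)
  rw [norm_mul]
  exact mul_le_mul (norm_deriv_le_of_lipschitzOn hnhds hg) (h u ⟨hu.1.le, hu.2⟩) (norm_nonneg _)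
    K.coe_nonneg

/-- A source term `w u r` for the transport equation `∂ₜ D = ∂ᵣ D + w` on `[a, b] × [0, ∞)`, whose
Lipschitz constant `k u` in `r` is integrable in time. The solution vanishing at time `a` is
`D t r = ∫ u in a..t, w u (t + r - u)`. -/
structure IsLipschitzSource (w : ℝ → ℝ → ℝ) (k : ℝ → ℝ) (a b : ℝ) : Prop where
  integrable_const : IntervalIntegrable k volume a b
  integrable_zero : IntervalIntegrable (fun u => w u 0) volume a b
  integrable_characteristic : ∀ t ∈ Icc a b, ∀ x ≥ t,
    IntervalIntegrable (fun u => w u (x - u)) volume a t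
  lipschitz : ∀ u ∈ Icc a b, ∀ r ≥ 0, ∀ r' ≥ 0, |w u r - w u r'| ≤ k u * |r - r'|

namespace IsLipschitzSource

variable {w : ℝ → ℝ → ℝ} {k : ℝ → ℝ} {a b s t : ℝ}

theorem const_nonneg (hw : IsLipschitzSource w k a b) {u : ℝ} (hu : u ∈ Icc a b) : 0 ≤ k u := by
  simpa using (abs_nonneg _).trans (hw.lipschitz u hu 1 zero_le_one 0 le_rfl)

theorem integral_const_le (hw : IsLipschitzSource w k a b) (ht : t ∈ Icc a b) :
    ∫ u in a..t, k u ≤ ∫ u in a..b, k u :=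
  monotoneOn_intervalIntegral hw.integrable_const (fun _ => hw.const_nonneg) ht
    ⟨ht.1.trans ht.2, le_rfl⟩ ht.2

theorem integrable_zero_of_mem (hw : IsLipschitzSource w k a b) (ht : t ∈ Icc a b) :
    IntervalIntegrable (fun u => w u 0) volume a t :=
  intervalIntegrable_of_mem_Icc hw.integrable_zero ⟨le_rfl, ht.1.trans ht.2⟩ ht

theorem abs_integral_shift_sub_le (hw : IsLipschitzSource w k a b) (ht : t ∈ Icc a b) {r : ℝ}
    (hr : 0 ≤ r) :
    |(∫ u in a..t, w u (t + r - u)) - ∫ u in a..t, w u (t - u)| ≤ r * ∫ u in a..t, k u := by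
  rw [← intervalIntegral.integral_sub (hw.integrable_characteristic t ht _ (by linarith))
    (hw.integrable_characteristic t ht t le_rfl), ← intervalIntegral.integral_const_mul,
    ← Real.norm_eq_abs]
  refine intervalIntegral.norm_integral_le_of_norm_le ht.1 (.of_forall fun u hu => ?_)
    ((intervalIntegrable_of_mem_Icc hw.integrable_const ⟨le_rfl, ht.1.trans ht.2⟩ ht).const_mul r)
  have hlip := hw.lipschitz u ⟨hu.1.le, hu.2.trans ht.2⟩ (t + r - u) (by linarith [hu.2]) (t - u)
    (by linarith [hu.2])
  rwa [show t + r - u - (t - u) = r by ring, abs_of_nonneg hr, mul_comm] at hlip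

theorem abs_integral_sub_zero_le (hw : IsLipschitzSource w k a b) (ht : t ∈ Icc a b)
    (hs : s ∈ Icc a b) (hts : t ≤ s) :
    |∫ u in t..s, (w u (s - u) - w u 0)| ≤ (s - t) * ∫ u in t..s, k u := by
  rw [← intervalIntegral.integral_const_mul, ← Real.norm_eq_abs]
  refine intervalIntegral.norm_integral_le_of_norm_le hts (.of_forall fun u hu => ?_)
    ((intervalIntegrable_of_mem_Icc hw.integrable_const ht hs).const_mul _)
  have huI : u ∈ Icc a b := ⟨ht.1.trans hu.1.le, hu.2.trans hs.2⟩
  have hlip := hw.lipschitz u huI (s - u) (by linarith [hu.2]) 0 le_rfl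
  rw [sub_zero, abs_of_nonneg (sub_nonneg.2 hu.2), mul_comm] at hlip
  exact hlip.trans (mul_le_mul_of_nonneg_right (by linarith [hu.1]) (hw.const_nonneg huI))

theorem integral_sub_zero_increment (hw : IsLipschitzSource w k a b) (ht : t ∈ Icc a b)
    (hs : s ∈ Icc a b) (hts : t ≤ s) :
    (∫ u in a..s, (w u (s - u) - w u 0)) - ∫ u in a..t, (w u (t - u) - w u 0) =
      ((∫ u in a..t, w u (t + (s - t) - u)) - ∫ u in a..t, w u (t - u)) +
        ∫ u in t..s, (w u (s - u) - w u 0) := by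
  have hchar_t := hw.integrable_characteristic t ht
  have hzero_t := hw.integrable_zero_of_mem ht
  have hs_sub := (hw.integrable_characteristic s hs s le_rfl).sub (hw.integrable_zero_of_mem hs)
  have ht_sub := (hchar_t s hts).sub hzero_t
  rw [add_sub_cancel, ← intervalIntegral.integral_add_adjacent_intervals ht_sub
      (ht_sub.symm.trans hs_sub), intervalIntegral.integral_sub (hchar_t s hts) hzero_t,
    intervalIntegral.integral_sub (hchar_t t le_rfl) hzero_t]
  ring

theorem continuousOn_integral_sub_zero (hw : IsLipschitzSource w k a b) :
    ContinuousOn (fun t => ∫ u in a..t, (w u (t - u) - w u 0)) (Icc a b) := by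
  set ψ : ℝ → ℝ := fun t => ∫ u in a..t, (w u (t - u) - w u 0)
  have hincr : ∀ t ∈ Icc a b, ∀ s ∈ Icc a b, t ≤ s →
      |ψ s - ψ t| ≤ (s - t) * ∫ u in a..b, k u := fun t ht s hs hts => by
    have hsplit : (∫ u in a..t, k u) + ∫ u in t..s, k u = ∫ u in a..s, k u :=
      intervalIntegral.integral_add_adjacent_intervals
        (intervalIntegrable_of_mem_Icc hw.integrable_const ⟨le_rfl, ht.1.trans ht.2⟩ ht)
        (intervalIntegrable_of_mem_Icc hw.integrable_const ht hs)
    calc |ψ s - ψ t|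
        ≤ (s - t) * (∫ u in a..t, k u) + (s - t) * ∫ u in t..s, k u := by
          simp only [ψ]
          rw [hw.integral_sub_zero_increment ht hs hts]
          exact (abs_add_le _ _).trans <| add_le_add
            (hw.abs_integral_shift_sub_le ht (sub_nonneg.2 hts))
            (hw.abs_integral_sub_zero_le ht hs hts)
      _ ≤ (s - t) * ∫ u in a..b, k u := by
          rw [← mul_add, hsplit]
          exact mul_le_mul_of_nonneg_left (hw.integral_const_le hs) (sub_nonneg.2 hts)
  refine (LipschitzOnWith.of_dist_le' (K := ∫ u in a..b, k u) fun s hs t ht => ?_).continuousOn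
  rw [Real.dist_eq, Real.dist_eq]
  rcases le_total t s with hts | hst
  · rw [abs_of_nonneg (sub_nonneg.2 hts), mul_comm]
    exact hincr t ht s hs hts
  · rw [abs_sub_comm, abs_sub_comm s, abs_of_nonneg (sub_nonneg.2 hst), mul_comm]
    exact hincr s hs t ht hst

theorem hasDerivWithinAt_integral_sub_zero (hw : IsLipschitzSource w k a b) (ht : t ∈ Ico a b)
    {D' : ℝ}
    (hD : HasDerivWithinAt (fun r => ∫ u in a..t, w u (t + r - u)) D' (Ici 0) 0) :
    HasDerivWithinAt (fun s => ∫ u in a..s, (w u (s - u) - w u 0)) D' (Ioi t) t := by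
  set ψ : ℝ → ℝ := fun s => ∫ u in a..s, (w u (s - u) - w u 0)
  set Φ : ℝ → ℝ := fun r => ∫ u in a..t, w u (t + r - u)
  have htI : t ∈ Icc a b := Ico_subset_Icc_self ht
  have hmain : HasDerivWithinAt (fun s => Φ (s - t)) D' (Ioi t) t := by
    have hshift : HasDerivWithinAt (fun s : ℝ => s - t) 1 (Ioi t) t :=
      ((hasDerivAt_id t).sub_const t).hasDerivWithinAt
    have hmaps : MapsTo (fun s : ℝ => s - t) (Ioi t) (Ici 0) := fun s (hs : t < s) =>
      sub_nonneg.2 hs.le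
    have hD' : HasDerivWithinAt Φ D' (Ici 0) (t - t) := by rwa [sub_self]
    simpa only [mul_one, Function.comp_def] using
      HasDerivWithinAt.comp (h := fun s => s - t) t hD' hshift hmaps
  have hrem : HasDerivWithinAt (fun s => ψ s - Φ (s - t)) 0 (Ioi t) t := by
    rw [hasDerivWithinAt_iff_isLittleO, Asymptotics.isLittleO_iff]
    intro c hc
    have hR : Filter.Tendsto (fun s => ∫ u in a..s, k u) (nhdsWithin t (Ioi t))
        (nhds (∫ u in a..t, k u)) :=
      ((continuousOn_intervalIntegral hw.integrable_const) t htI).mono_of_mem_nhdsWithin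
        (Filter.mem_of_superset (Ioo_mem_nhdsGT ht.2) fun s hs => ⟨ht.1.trans hs.1.le, hs.2.le⟩)
    filter_upwards [Metric.tendsto_nhds.1 hR c hc, Ioo_mem_nhdsGT ht.2] with s hsc hs
    have hsI : s ∈ Icc a b := ⟨ht.1.trans hs.1.le, hs.2.le⟩
    have hincr := hw.integral_sub_zero_increment htI hsI hs.1.le
    have hbound := hw.abs_integral_sub_zero_le htI hsI hs.1.le
    have hka : ∀ {v}, v ∈ Icc a b → IntervalIntegrable k volume a v :=
      intervalIntegrable_of_mem_Icc hw.integrable_const ⟨le_rfl, htI.1.trans htI.2⟩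
    rw [← intervalIntegral.integral_interval_sub_left (hka hsI) (hka htI)] at hbound
    have hsmall : |ψ s - Φ (s - t) - (ψ t - Φ 0)| ≤ (s - t) * c := by
      rw [show ψ s - Φ (s - t) - (ψ t - Φ 0) = ∫ u in t..s, (w u (s - u) - w u 0) by
        simp only [Φ, add_zero]; linarith]
      exact hbound.trans (mul_le_mul_of_nonneg_left
        ((le_abs_self _).trans (le_of_lt hsc)) (sub_nonneg.2 hs.1.le))
    simpa [abs_of_pos (sub_pos.2 hs.1), mul_comm] using hsmall
  simpa only [Pi.add_def, add_sub_cancel, add_zero] using hmain.add hrem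

/- This is `D t 0 = ∫ u in a..t, (∂ᵣ D u 0 + w u 0)`: the difference of the two sides is
differentiated along the characteristic through `(t, 0)`. -/
theorem integral_deriv_zero (hw : IsLipschitzSource w k a b) {D' : ℝ → ℝ}
    (hD : ∀ t ∈ Icc a b,
      HasDerivWithinAt (fun r => ∫ u in a..t, w u (t + r - u)) (D' t) (Ici 0) 0)
    (hD' : IntervalIntegrable D' volume a b) (ht : t ∈ Icc a b) :
    ∫ u in a..t, D' u = ∫ u in a..t, (w u (t - u) - w u 0) := by
  have hderiv : ∀ s ∈ Ioo a t,
      HasDerivWithinAt (fun s => ∫ u in a..s, (w u (s - u) - w u 0)) (D' s) (Ioi s) s :=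
    fun s hs => hw.hasDerivWithinAt_integral_sub_zero ⟨hs.1.le, hs.2.trans_le ht.2⟩
      (hD s ⟨hs.1.le, hs.2.le.trans ht.2⟩)
  rw [intervalIntegral.integral_eq_sub_of_hasDeriv_right_of_le ht.1
    (hw.continuousOn_integral_sub_zero.mono (Icc_subset_Icc_right ht.2)) hderiv
    (intervalIntegrable_of_mem_Icc hD' ⟨le_rfl, ht.1.trans ht.2⟩ ht)]
  simp only [intervalIntegral.integral_same, sub_zero]

end IsLipschitzSource

/-- The data of the equation: a nonnegative locally integrable arrival rate `lam` and a positive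
`K`-Lipschitz survival function `G` with `G 0 = 1`, both considered on `[0, ∞)` only. -/
structure IsHydroData (lam G : ℝ → ℝ) (K : NNReal) : Prop where
  rate_nonneg : ∀ t ≥ 0, 0 ≤ lam t
  rate_integrableOn : ∀ T, IntegrableOn lam (Icc 0 T)
  lipschitz : LipschitzOnWith K G (Ici 0)
  zero : G 0 = 1
  pos : ∀ x ≥ 0, 0 < G x
  le_one : ∀ x ≥ 0, G x ≤ 1

/-- `G` is the survival function of the probability density `g` on `[0, ∞)`, whose hazard rate
`g / G` is at most `H`. -/
structure HasBoundedHazardRate (g G : ℝ → ℝ) (H : ℝ) : Prop where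
  nonneg : ∀ x ≥ 0, 0 ≤ g x
  integrableOn : IntegrableOn g (Ici 0)
  integral_eq_one : ∫ x in Ici (0 : ℝ), g x = 1
  survival_eq : ∀ x ≥ 0, G x = ∫ y in Ioi x, g y
  density_le : ∀ x ≥ 0, g x ≤ H * G x

namespace HasBoundedHazardRate

variable {g G : ℝ → ℝ} {H x y : ℝ}

theorem survival_zero (h : HasBoundedHazardRate g G H) : G 0 = 1 := by
  rw [h.survival_eq 0 le_rfl, ← integral_Ici_eq_integral_Ioi, h.integral_eq_one]

theorem bound_nonneg (h : HasBoundedHazardRate g G H) : 0 ≤ H := by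
  simpa [h.survival_zero] using (h.nonneg 0 le_rfl).trans (h.density_le 0 le_rfl)

theorem intervalIntegrable (h : HasBoundedHazardRate g G H) (hx : 0 ≤ x) (hxy : x ≤ y) :
    IntervalIntegrable g volume x y :=
  (intervalIntegrable_iff_integrableOn_Ioc_of_le hxy).2
    (h.integrableOn.mono_set fun _ hu => hx.trans hu.1.le)

theorem survival_sub_eq_integral (h : HasBoundedHazardRate g G H) (hx : 0 ≤ x) (hxy : x ≤ y) :
    G x - G y = ∫ u in x..y, g u := by
  rw [h.survival_eq x hx, h.survival_eq y (hx.trans hxy)]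
  exact intervalIntegral.integral_Ioi_sub_Ioi
    (h.integrableOn.mono_set fun _ hu => hx.trans (le_of_lt hu)) hxy

theorem antitoneOn (h : HasBoundedHazardRate g G H) : AntitoneOn G (Ici 0) := by
  intro x hx y _ hxy
  rw [← sub_nonneg, h.survival_sub_eq_integral hx hxy]
  exact intervalIntegral.integral_nonneg hxy fun u hu => h.nonneg u (le_trans hx hu.1)

theorem survival_le_one (h : HasBoundedHazardRate g G H) (hx : 0 ≤ x) : G x ≤ 1 :=
  h.survival_zero ▸ h.antitoneOn self_mem_Ici hx hx

theorem survival_sub_le (h : HasBoundedHazardRate g G H) (hx : 0 ≤ x) (hxy : x ≤ y) :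
    G x - G y ≤ H * G x * (y - x) := by
  calc G x - G y = ∫ u in x..y, g u := h.survival_sub_eq_integral hx hxy
    _ ≤ ∫ _ in x..y, H * G x :=
      intervalIntegral.integral_mono_on hxy (h.intervalIntegrable hx hxy)
        intervalIntegrable_const fun u hu =>
        (h.density_le u (hx.trans hu.1)).trans <| mul_le_mul_of_nonneg_left
          (h.antitoneOn hx (hx.trans hu.1) hu.1) h.bound_nonneg
    _ = H * G x * (y - x) := by rw [intervalIntegral.integral_const, smul_eq_mul, mul_comm]

theorem lipschitzOnWith (h : HasBoundedHazardRate g G H) :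
    LipschitzOnWith H.toNNReal G (Ici 0) := by
  refine LipschitzOnWith.of_le_add_mul' H fun x hx y hy => ?_
  rw [Real.dist_eq]
  rcases le_total x y with hxy | hyx
  · have hle : H * G x * (y - x) ≤ H * |x - y| := by
      rw [abs_sub_comm, abs_of_nonneg (sub_nonneg.2 hxy)]
      exact mul_le_mul_of_nonneg_right
        (mul_le_of_le_one_right h.bound_nonneg (h.survival_le_one hx)) (sub_nonneg.2 hxy)
    linarith [h.survival_sub_le hx hxy]
  · linarith [h.antitoneOn hy hx hyx, mul_nonneg h.bound_nonneg (abs_nonneg (x - y))]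

theorem survival_pos (h : HasBoundedHazardRate g G H) (hx : 0 ≤ x) : 0 < G x := by
  have hH := h.bound_nonneg
  -- Over a step of length `δ` the survival function loses at most half of its value.
  set δ := 1 / (2 * (H + 1))
  have hδ : 0 < δ := by positivity
  have hHδ : H * δ ≤ 1 / 2 := by
    rw [mul_one_div, div_le_div_iff₀ (by positivity) two_pos]
    linarith
  have hstep : ∀ n : ℕ, 0 < G (n * δ) := by
    intro n
    induction n with
    | zero => simp [h.survival_zero]
    | succ n ih =>
      have hdrop := h.survival_sub_le (x := n * δ) (y := n * δ + δ) (by positivity) (by linarith)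
      rw [add_sub_cancel_left] at hdrop
      rw [Nat.cast_succ, add_one_mul]
      nlinarith
  obtain ⟨n, hn⟩ := exists_nat_ge (x / δ)
  have hxn : x ≤ n * δ := (div_le_iff₀ hδ).1 hn
  exact (hstep n).trans_le (h.antitoneOn hx (hx.trans hxn) hxn)

theorem isHydroData (h : HasBoundedHazardRate g G H) {lam : ℝ → ℝ}
    (hlam_nonneg : ∀ t ≥ 0, 0 ≤ lam t) (hlam : ∀ T, IntegrableOn lam (Icc 0 T)) :
    IsHydroData lam G H.toNNReal where
  rate_nonneg := hlam_nonneg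
  rate_integrableOn := hlam
  lipschitz := h.lipschitzOnWith
  zero := h.survival_zero
  pos _ hx := h.survival_pos hx
  le_one _ hx := h.survival_le_one hx

end HasBoundedHazardRate

theorem aestronglyMeasurable_along_curve {f : ℝ → ℝ → ℝ} {ρ : ℝ → ℝ} {s : Set ℝ}
    (hs : MeasurableSet s) (hs₀ : s ⊆ Ici 0) (hf : ∀ r ≥ 0, Measurable fun t => f t r)
    (hf' : ∀ t ≥ 0, ContinuousOn (f t) (Ici 0)) (hρ : Measurable ρ) (hρ₀ : ∀ u ∈ s, 0 ≤ ρ u) :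
    AEStronglyMeasurable (fun u => f u (ρ u)) (volume.restrict s) := by
  have hext : Measurable (Function.uncurry fun r t : ℝ => f (max t 0) (max r 0)) :=
    measurable_uncurry_of_continuous_of_measurable (ι := ℝ)
      (fun t => (hf' _ (le_max_right t 0)).comp_continuous (by fun_prop)
        fun r => le_max_right r 0)
      (fun r => (hf _ (le_max_right r 0)).comp (by fun_prop))
  refine (hext.comp (hρ.prodMk measurable_id)).aestronglyMeasurable.congr ?_
  refine ae_restrict_of_forall_mem hs fun u hu => ?_
  have hu₀ : 0 ≤ u := hs₀ hu
  simp only [Function.comp_apply, Function.uncurry_apply_pair, id, max_eq_left (hρ₀ u hu),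
    max_eq_left hu₀]

theorem tendsto_slope_one_div_add_one_derivWithin {f : ℝ → ℝ}
    (hf : DifferentiableWithinAt ℝ f (Ici 0) 0) :
    Filter.Tendsto (fun n : ℕ => (f (1 / ((n : ℝ) + 1)) - f 0) / (1 / ((n : ℝ) + 1)))
      Filter.atTop (nhds (derivWithin f (Ici 0) 0)) := by
  have hpos : ∀ n : ℕ, (0 : ℝ) < 1 / ((n : ℝ) + 1) := fun n => by positivity
  have hseq : Filter.Tendsto (fun n : ℕ => (1 : ℝ) / (n + 1)) Filter.atTop
      (nhdsWithin 0 (Ici 0 \ {0})) :=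
    tendsto_nhdsWithin_iff.2 ⟨tendsto_one_div_add_atTop_nhds_zero_nat,
      .of_forall fun n => ⟨(hpos n).le, (hpos n).ne'⟩⟩
  refine ((hasDerivWithinAt_iff_tendsto_slope.1 hf.hasDerivWithinAt).comp hseq).congr fun n => ?_
  rw [Function.comp_apply, slope_def_field, sub_zero]

theorem aestronglyMeasurable_derivWithin_zero {f : ℝ → ℝ → ℝ}
    (hf : ∀ r ≥ 0, Measurable fun t => f t r)
    (hf' : ∀ t ≥ 0, DifferentiableWithinAt ℝ (f t) (Ici 0) 0) :
    AEStronglyMeasurable (fun t => derivWithin (f t) (Ici 0) 0) (volume.restrict (Ici 0)) :=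
  aestronglyMeasurable_of_tendsto_ae Filter.atTop
    (fun n : ℕ => (((hf (1 / ((n : ℝ) + 1)) (by positivity)).sub (hf 0 le_rfl)).div_const
      (1 / ((n : ℝ) + 1))).aestronglyMeasurable)
    (ae_restrict_of_forall_mem measurableSet_Ici fun t ht =>
      tendsto_slope_one_div_add_one_derivWithin (hf' t ht))

theorem abs_derivWithin_zero_le_of_lipschitzOnWith {f : ℝ → ℝ} {N : NNReal}
    (hf : LipschitzOnWith N f (Ici 0)) : |derivWithin f (Ici 0) 0| ≤ N := by
  by_cases hdiff : DifferentiableWithinAt ℝ f (Ici 0) 0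
  · refine le_of_tendsto (tendsto_slope_one_div_add_one_derivWithin hdiff).abs
      (.of_forall fun n => ?_)
    have hpos : (0 : ℝ) < 1 / ((n : ℝ) + 1) := by positivity
    have hle := hf.dist_le_mul (1 / ((n : ℝ) + 1)) hpos.le 0 self_mem_Ici
    rw [Real.dist_eq, Real.dist_eq, sub_zero, abs_of_pos hpos] at hle
    rwa [abs_div, abs_of_pos hpos, div_le_iff₀ hpos]
  · rw [derivWithin_zero_of_not_differentiableWithinAt hdiff, abs_zero]
    exact N.coe_nonneg

namespace IsHydroData

variable {lam G f : ℝ → ℝ} {K : NNReal} {s a x y : ℝ}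

theorem intervalIntegrable_rate (h : IsHydroData lam G K) (hs : 0 ≤ s) (hsa : s ≤ a) :
    IntervalIntegrable lam volume s a :=
  (intervalIntegrable_iff_integrableOn_Icc_of_le hsa).2
    ((h.rate_integrableOn a).mono_set (Icc_subset_Icc_left hs))

theorem continuousOn_kernel (h : IsHydroData lam G K) (hsa : s ≤ a) (hax : a ≤ x) :
    ContinuousOn (fun u => G (x - u)) (uIcc s a) := by
  refine h.lipschitz.continuousOn.comp (by fun_prop) fun u hu => ?_
  rw [uIcc_of_le hsa] at hu
  exact sub_nonneg.2 (hu.2.trans hax)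

theorem intervalIntegrable_kernel_mul_iff (h : IsHydroData lam G K) (hsa : s ≤ a) (hax : a ≤ x) :
    IntervalIntegrable (fun u => G (x - u) * f u) volume s a ↔ IntervalIntegrable f volume s a := by
  have hne : ∀ u ∈ uIcc s a, G (x - u) ≠ 0 := fun u hu => by
    rw [uIcc_of_le hsa] at hu
    exact (h.pos _ (sub_nonneg.2 (hu.2.trans hax))).ne'
  have hcont := h.continuousOn_kernel hsa hax
  refine ⟨fun hf => (hf.continuousOn_mul (hcont.inv₀ hne)).congr fun u hu => ?_,
    fun hf => hf.continuousOn_mul hcont⟩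
  exact inv_mul_cancel_left₀ (hne u (uIoc_subset_uIcc hu)) _

theorem abs_integral_kernel_mul_sub_le (h : IsHydroData lam G K) (hsa : s ≤ a) (hax : a ≤ x)
    (hay : a ≤ y) :
    |(∫ u in s..a, G (x - u) * f u) - ∫ u in s..a, G (y - u) * f u| ≤
      K * (∫ u in s..a, |f u|) * |x - y| := by
  by_cases hf : IntervalIntegrable f volume s a
  · rw [← intervalIntegral.integral_sub ((h.intervalIntegrable_kernel_mul_iff hsa hax).2 hf)
      ((h.intervalIntegrable_kernel_mul_iff hsa hay).2 hf), mul_right_comm,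
      ← intervalIntegral.integral_const_mul, ← Real.norm_eq_abs]
    refine intervalIntegral.norm_integral_le_of_norm_le hsa (.of_forall fun u hu => ?_)
      (hf.abs.const_mul _)
    have hlip := h.lipschitz.dist_le_mul (x - u) (sub_nonneg.2 (hu.2.trans hax)) (y - u)
      (sub_nonneg.2 (hu.2.trans hay))
    rw [Real.dist_eq, Real.dist_eq, sub_sub_sub_cancel_right] at hlip
    rw [← sub_mul, norm_mul]
    exact mul_le_mul_of_nonneg_right hlip (abs_nonneg _)
  · rw [intervalIntegral.integral_undef (mt (h.intervalIntegrable_kernel_mul_iff hsa hax).1 hf),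
      intervalIntegral.integral_undef (mt (h.intervalIntegrable_kernel_mul_iff hsa hay).1 hf),
      sub_zero, abs_zero]
    exact mul_nonneg (mul_nonneg K.coe_nonneg
      (intervalIntegral.integral_nonneg hsa fun _ _ => abs_nonneg _)) (abs_nonneg _)

end IsHydroData

/-- The boundary derivative `∂ᵣ z_ℓ(u, 0)`, taken from the right. -/
noncomputable def boundarySlope (z : ℕ → ℝ → ℝ → ℝ) (ℓ : ℕ) (u : ℝ) : ℝ :=
  derivWithin (z ℓ u) (Ici 0) 0

/-- The nonlinear arrival term of level `ℓ`, before multiplication by the rate. Levels are numbered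
from `0`, so that level `ℓ` stands for `Z_{ℓ+1}`. -/
noncomputable def hydroSource (G : ℝ → ℝ) (z : ℕ → ℝ → ℝ → ℝ) : ℕ → ℝ → ℝ → ℝ
  | 0, u, r => G r * (1 - z 0 u 0 ^ 2)
  | ℓ + 1, u, r => (z ℓ u 0 + z (ℓ + 1) u 0) * (z ℓ u r - z (ℓ + 1) u r)

/-- A bounded solution of the interior equations (i) and (iii) of the hydrodynamic PDE, with levels
numbered from `0`. The Lipschitz constant in `r` may depend on the level and on time, and the
boundary slopes need not be integrable: a divergent integral has the value `0`. -/
structure IsMildSolution (lam G : ℝ → ℝ) (z₀ : ℕ → ℝ → ℝ) (z : ℕ → ℝ → ℝ → ℝ) : Prop where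
  lipschitz : ∀ ℓ, ∀ t ≥ 0, ∃ N, LipschitzOnWith N (z ℓ t) (Ici 0)
  differentiable : ∀ ℓ, ∀ t ≥ 0, DifferentiableWithinAt ℝ (z ℓ t) (Ici 0) 0
  abs_le_one : ∀ ℓ, ∀ t ≥ 0, ∀ r ≥ 0, |z ℓ t r| ≤ 1
  measurable : ∀ ℓ, ∀ r ≥ 0, Measurable fun t => z ℓ t r
  eq : ∀ ℓ, ∀ t ≥ 0, ∀ r ≥ 0, z ℓ t r = z₀ ℓ (t + r)
    - (∫ u in (0 : ℝ)..t, G (t + r - u) * boundarySlope z (ℓ + 1) u)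
    + ∫ u in (0 : ℝ)..t, lam u * hydroSource G z ℓ u (t + r - u)

theorem abs_mul_sub_mul_le {a b c d A B : ℝ} (ha : |a| ≤ A) (hd : |d| ≤ B) :
    |a * b - c * d| ≤ A * |b - d| + B * |a - c| := by
  calc |a * b - c * d| = |a * (b - d) + d * (a - c)| := by ring_nf
    _ ≤ |a| * |b - d| + |d| * |a - c| := by
      rw [← abs_mul, ← abs_mul]; exact abs_add_le _ _
    _ ≤ A * |b - d| + B * |a - c| := by gcongr

namespace IsMildSolution

variable {lam G : ℝ → ℝ} {K : NNReal} {z₀ : ℕ → ℝ → ℝ} {z z' : ℕ → ℝ → ℝ → ℝ}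
  {ℓ : ℕ} {a t u r r' : ℝ}

theorem aestronglyMeasurable_boundarySlope (hz : IsMildSolution lam G z₀ z) (ℓ : ℕ) :
    AEStronglyMeasurable (boundarySlope z ℓ) (volume.restrict (Ici 0)) :=
  aestronglyMeasurable_derivWithin_zero (hz.measurable ℓ) (hz.differentiable ℓ)

theorem abs_hydroSource_le (h : IsHydroData lam G K) (hz : IsMildSolution lam G z₀ z) (ℓ : ℕ)
    (hu : 0 ≤ u) (hr : 0 ≤ r) : |hydroSource G z ℓ u r| ≤ 4 := by
  cases ℓ with
  | zero =>
    have hsq : z 0 u 0 ^ 2 ≤ 1 := (sq_le_one_iff_abs_le_one _).2 (hz.abs_le_one 0 u hu 0 le_rfl)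
    rw [hydroSource, abs_mul, abs_of_pos (h.pos r hr), abs_of_nonneg (sub_nonneg.2 hsq)]
    nlinarith [h.pos r hr, h.le_one r hr, sq_nonneg (z 0 u 0)]
  | succ ℓ =>
    rw [hydroSource, abs_mul]
    calc |z ℓ u 0 + z (ℓ + 1) u 0| * |z ℓ u r - z (ℓ + 1) u r|
        ≤ (1 + 1) * (1 + 1) := by
          gcongr
          · exact (abs_add_le _ _).trans <| add_le_add (hz.abs_le_one _ u hu 0 le_rfl)
              (hz.abs_le_one _ u hu 0 le_rfl)
          · exact (abs_sub _ _).trans <| add_le_add (hz.abs_le_one _ u hu r hr)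
              (hz.abs_le_one _ u hu r hr)
      _ = 4 := by norm_num

theorem aestronglyMeasurable_hydroSource (h : IsHydroData lam G K)
    (hz : IsMildSolution lam G z₀ z) (ℓ : ℕ) {ρ : ℝ → ℝ} (hρ : Measurable ρ)
    (hρ₀ : ∀ u ∈ Icc 0 a, 0 ≤ ρ u) :
    AEStronglyMeasurable (fun u => hydroSource G z ℓ u (ρ u)) (volume.restrict (Icc 0 a)) := by
  have hcurve {f : ℝ → ℝ → ℝ} (hf : ∀ r ≥ 0, Measurable fun t => f t r)
      (hf' : ∀ t ≥ 0, ContinuousOn (f t) (Ici 0)) :=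
    aestronglyMeasurable_along_curve measurableSet_Icc Icc_subset_Ici_self hf hf' hρ hρ₀
  have hlevel (j : ℕ) := hcurve (hz.measurable j) fun t ht =>
    (hz.lipschitz j t ht).choose_spec.continuousOn
  have hzero (j : ℕ) : AEStronglyMeasurable (fun u => z j u 0) (volume.restrict (Icc 0 a)) :=
    (hz.measurable j 0 le_rfl).aestronglyMeasurable
  cases ℓ with
  | zero =>
    exact (hcurve (f := fun _ => G) (fun _ _ => measurable_const)
      fun _ _ => h.lipschitz.continuousOn).mul (aestronglyMeasurable_const.sub ((hzero 0).pow 2))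
  | succ ℓ => exact ((hzero ℓ).add (hzero (ℓ + 1))).mul ((hlevel ℓ).sub (hlevel (ℓ + 1)))

theorem intervalIntegrable_rate_mul_hydroSource (h : IsHydroData lam G K)
    (hz : IsMildSolution lam G z₀ z) (ℓ : ℕ) {ρ : ℝ → ℝ} (ha : 0 ≤ a) (hρ : Measurable ρ)
    (hρ₀ : ∀ u ∈ Icc 0 a, 0 ≤ ρ u) :
    IntervalIntegrable (fun u => lam u * hydroSource G z ℓ u (ρ u)) volume 0 a :=
  (intervalIntegrable_iff_integrableOn_Icc_of_le ha).2 <|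
    (h.rate_integrableOn a).mul_bdd (c := 4) (hz.aestronglyMeasurable_hydroSource h ℓ hρ hρ₀)
      (ae_restrict_of_forall_mem measurableSet_Icc fun u hu =>
        hz.abs_hydroSource_le h ℓ hu.1 (hρ₀ u hu))

theorem abs_hydroSource_sub_le (h : IsHydroData lam G K) (hz : IsMildSolution lam G z₀ z)
    {N : NNReal} (hlip : ∀ j, j + 1 = ℓ → LipschitzOnWith N (z j u) (Ici 0)) (hu : 0 ≤ u)
    (hr : 0 ≤ r) (hr' : 0 ≤ r') :
    |hydroSource G z ℓ u r - hydroSource G z ℓ u r'| ≤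
      (K + 2 * N) * |r - r'| + 2 * |z ℓ u r - z ℓ u r'| := by
  cases ℓ with
  | zero =>
    have hsq : z 0 u 0 ^ 2 ≤ 1 := (sq_le_one_iff_abs_le_one _).2 (hz.abs_le_one 0 u hu 0 le_rfl)
    have hG : |G r - G r'| ≤ K * |r - r'| := h.lipschitz.dist_le_mul r hr r' hr'
    rw [hydroSource, hydroSource, ← sub_mul, abs_mul, abs_of_nonneg (sub_nonneg.2 hsq)]
    nlinarith [sq_nonneg (z 0 u 0), abs_nonneg (G r - G r'), abs_nonneg (z 0 u r - z 0 u r'),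
      mul_nonneg N.coe_nonneg (abs_nonneg (r - r'))]
  | succ ℓ =>
    have hprev : |z ℓ u r - z ℓ u r'| ≤ N * |r - r'| := (hlip ℓ rfl).dist_le_mul r hr r' hr'
    have hsum : |z ℓ u 0 + z (ℓ + 1) u 0| ≤ 2 := (abs_add_le _ _).trans <| by
      linarith [hz.abs_le_one ℓ u hu 0 le_rfl, hz.abs_le_one (ℓ + 1) u hu 0 le_rfl]
    calc |hydroSource G z (ℓ + 1) u r - hydroSource G z (ℓ + 1) u r'|
        = |z ℓ u 0 + z (ℓ + 1) u 0|
            * |(z ℓ u r - z ℓ u r') - (z (ℓ + 1) u r - z (ℓ + 1) u r')| := by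
          rw [hydroSource, hydroSource, ← abs_mul]; ring_nf
      _ ≤ 2 * (N * |r - r'| + |z (ℓ + 1) u r - z (ℓ + 1) u r'|) := by
          gcongr
          exact (abs_sub _ _).trans (by gcongr)
      _ ≤ (K + 2 * N) * |r - r'| + 2 * |z (ℓ + 1) u r - z (ℓ + 1) u r'| := by
          linarith [mul_nonneg K.coe_nonneg (abs_nonneg (r - r'))]

theorem abs_hydroSource_sub_hydroSource_le (h : IsHydroData lam G K)
    (hz : IsMildSolution lam G z₀ z) (hz' : IsMildSolution lam G z₀ z') {δ : ℝ} (hu : 0 ≤ u)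
    (hr : 0 ≤ r) (hδ : ∀ j, ∀ y ≥ 0, |z j u y - z' j u y| ≤ δ) :
    |hydroSource G z ℓ u r - hydroSource G z' ℓ u r| ≤ 8 * δ := by
  have h0 := fun j => hδ j 0 le_rfl
  have hbd := fun j => hz.abs_le_one j u hu
  have hbd' := fun j => hz'.abs_le_one j u hu
  cases ℓ with
  | zero =>
    have hsum : |z' 0 u 0 + z 0 u 0| ≤ 2 := (abs_add_le _ _).trans <| by
      linarith [hbd 0 0 le_rfl, hbd' 0 0 le_rfl]
    calc |hydroSource G z 0 u r - hydroSource G z' 0 u r|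
        = G r * (|z' 0 u 0 + z 0 u 0| * |z 0 u 0 - z' 0 u 0|) := by
          rw [hydroSource, hydroSource, ← mul_sub, abs_mul, abs_of_pos (h.pos r hr),
            abs_sub_comm, ← abs_mul]
          ring_nf
      _ ≤ 1 * (2 * δ) := by gcongr; exacts [h.le_one r hr, h0 0]
      _ ≤ 8 * δ := by linarith [(abs_nonneg _).trans (h0 0)]
  | succ ℓ =>
    have hsum : |z ℓ u 0 + z (ℓ + 1) u 0| ≤ 2 := (abs_add_le _ _).trans <| by
      linarith [hbd ℓ 0 le_rfl, hbd (ℓ + 1) 0 le_rfl]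
    have hdiff : |z' ℓ u r - z' (ℓ + 1) u r| ≤ 2 := (abs_sub _ _).trans <| by
      linarith [hbd' ℓ r hr, hbd' (ℓ + 1) r hr]
    have hdr : |(z ℓ u r - z (ℓ + 1) u r) - (z' ℓ u r - z' (ℓ + 1) u r)| ≤ 2 * δ := by
      rw [sub_sub_sub_comm]
      exact (abs_sub _ _).trans (by linarith [hδ ℓ r hr, hδ (ℓ + 1) r hr])
    have hd0 : |(z ℓ u 0 + z (ℓ + 1) u 0) - (z' ℓ u 0 + z' (ℓ + 1) u 0)| ≤ 2 * δ := by
      rw [add_sub_add_comm]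
      exact (abs_add_le _ _).trans (by linarith [h0 ℓ, h0 (ℓ + 1)])
    exact (abs_mul_sub_mul_le hsum hdiff).trans (by linarith)

end IsMildSolution

open Classical in
/-- The boundary slope of level `k` if it is integrable on `[0, b]`, and `0` otherwise. Against a
positive continuous kernel a non-integrable slope has the junk integral `0`, so it can be replaced
by `0` without changing the equations at time `b`. -/
noncomputable def activeSlope (z : ℕ → ℝ → ℝ → ℝ) (k : ℕ) (b : ℝ) : ℝ → ℝ :=
  if IntervalIntegrable (boundarySlope z k) volume 0 b then boundarySlope z k else 0

/-- Integrability of the boundary slope of level `k` on `[0, a]` persists on `[0, b]`. -/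
def Persists (z : ℕ → ℝ → ℝ → ℝ) (k : ℕ) (a b : ℝ) : Prop :=
  IntervalIntegrable (boundarySlope z k) volume 0 a →
    IntervalIntegrable (boundarySlope z k) volume 0 b

/-- The initial datum of level `ℓ`, as a function of `t + r`, for the equations restarted at time
`a`, in which the boundary slope is the one active on `[0, b]`. -/
noncomputable def restartDatum (lam G : ℝ → ℝ) (z₀ : ℕ → ℝ → ℝ) (z : ℕ → ℝ → ℝ → ℝ) (ℓ : ℕ)
    (a b y : ℝ) : ℝ :=
  z₀ ℓ y - (∫ u in (0 : ℝ)..a, G (y - u) * activeSlope z (ℓ + 1) b u)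
    + ∫ u in (0 : ℝ)..a, lam u * hydroSource G z ℓ u (y - u)

section Slopes

variable {z : ℕ → ℝ → ℝ → ℝ} {k : ℕ} {a b s t : ℝ}

theorem activeSlope_of_intervalIntegrable
    (hk : IntervalIntegrable (boundarySlope z k) volume 0 b) :
    activeSlope z k b = boundarySlope z k :=
  if_pos hk

theorem activeSlope_of_not_intervalIntegrable
    (hk : ¬IntervalIntegrable (boundarySlope z k) volume 0 b) : activeSlope z k b = 0 :=
  if_neg hk

theorem intervalIntegrable_activeSlope :
    IntervalIntegrable (activeSlope z k b) volume 0 b := by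
  by_cases hk : IntervalIntegrable (boundarySlope z k) volume 0 b
  · rwa [activeSlope_of_intervalIntegrable hk]
  · rw [activeSlope_of_not_intervalIntegrable hk]
    exact intervalIntegrable_const

theorem abs_activeSlope_le_abs_boundarySlope (u : ℝ) :
    |activeSlope z k b u| ≤ |boundarySlope z k u| := by
  by_cases hk : IntervalIntegrable (boundarySlope z k) volume 0 b
  · rw [activeSlope_of_intervalIntegrable hk]
  · rw [activeSlope_of_not_intervalIntegrable hk, Pi.zero_apply, abs_zero]
    exact abs_nonneg _

theorem Persists.mono (hp : Persists z k a b) (hs : s ∈ Icc a b) (ht : t ∈ Icc a b)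
    (ha : 0 ≤ a) : Persists z k s t := fun hk =>
  intervalIntegrable_of_mem_Icc
    (hp (intervalIntegrable_of_mem_Icc hk ⟨le_rfl, ha.trans hs.1⟩ ⟨ha, hs.1⟩))
    ⟨le_rfl, ha.trans (hs.1.trans hs.2)⟩ ⟨ha.trans ht.1, ht.2⟩

theorem Persists.trans (hab : Persists z k a b) (hbs : Persists z k b s) : Persists z k a s :=
  fun hk => hbs (hab hk)

theorem eventually_forall_persists (z : ℕ → ℝ → ℝ → ℝ) (k : ℕ) (ha : 0 ≤ a) :
    ∀ᶠ b in nhdsWithin a (Ioi a), ∀ t ∈ Ioc a b, Persists z k t b := by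
  by_cases hk : ∃ b > a, IntervalIntegrable (boundarySlope z k) volume 0 b
  · obtain ⟨b, hab, hb⟩ := hk
    filter_upwards [Ioc_mem_nhdsGT hab] with s hs t _ _
    exact intervalIntegrable_of_mem_Icc hb ⟨le_rfl, ha.trans hab.le⟩ ⟨ha.trans hs.1.le, hs.2⟩
  · push Not at hk
    exact .of_forall fun s t ht htk => absurd htk (hk t ht.1)

end Slopes

namespace IsMildSolution

variable {lam G : ℝ → ℝ} {K : NNReal} {z₀ : ℕ → ℝ → ℝ} {z : ℕ → ℝ → ℝ → ℝ}
  {k ℓ : ℕ} {a b t x x' : ℝ}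

theorem integral_kernel_mul_boundarySlope (h : IsHydroData lam G K) (ht : 0 ≤ t)
    (hp : Persists z k t b) (hx : t ≤ x) :
    ∫ u in (0 : ℝ)..t, G (x - u) * boundarySlope z k u =
      ∫ u in (0 : ℝ)..t, G (x - u) * activeSlope z k b u := by
  by_cases hk : IntervalIntegrable (boundarySlope z k) volume 0 b
  · rw [activeSlope_of_intervalIntegrable hk]
  · simp only [activeSlope_of_not_intervalIntegrable hk, Pi.zero_apply, mul_zero,
      intervalIntegral.integral_zero]
    exact intervalIntegral.integral_undef
      (mt (fun hi => hp ((h.intervalIntegrable_kernel_mul_iff ht hx).1 hi)) hk)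

theorem intervalIntegrable_rate_mul_hydroSource_sub (h : IsHydroData lam G K)
    (hz : IsMildSolution lam G z₀ z) (ℓ : ℕ) (ht : 0 ≤ t) (hx : t ≤ x) :
    IntervalIntegrable (fun u => lam u * hydroSource G z ℓ u (x - u)) volume 0 t :=
  hz.intervalIntegrable_rate_mul_hydroSource h ℓ ht (by fun_prop) fun _ hu =>
    sub_nonneg.2 (hu.2.trans hx)

theorem eq_restart (h : IsHydroData lam G K) (hz : IsMildSolution lam G z₀ z) (ha : 0 ≤ a)
    (hat : a ≤ t) (htb : t ≤ b) (hp : Persists z (ℓ + 1) t b) (hx : t ≤ x) :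
    z ℓ t (x - t) = restartDatum lam G z₀ z ℓ a b x
      - (∫ u in a..t, G (x - u) * activeSlope z (ℓ + 1) b u)
      + ∫ u in a..t, lam u * hydroSource G z ℓ u (x - u) := by
  have ht := ha.trans hat
  have ha_mem : a ∈ Icc 0 t := ⟨ha, hat⟩
  have hslope := (h.intervalIntegrable_kernel_mul_iff ht hx).2 <|
    intervalIntegrable_of_mem_Icc (intervalIntegrable_activeSlope (z := z) (k := ℓ + 1) (b := b))
      ⟨le_rfl, ht.trans htb⟩ ⟨ht, htb⟩
  have hsource := hz.intervalIntegrable_rate_mul_hydroSource_sub h ℓ ht hx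
  rw [hz.eq ℓ t ht (x - t) (sub_nonneg.2 hx), restartDatum, add_sub_cancel,
    integral_kernel_mul_boundarySlope h ht hp hx,
    ← intervalIntegral.integral_add_adjacent_intervals
      (intervalIntegrable_of_mem_Icc hslope ⟨le_rfl, ht⟩ ha_mem)
      (intervalIntegrable_of_mem_Icc hslope ha_mem ⟨ht, le_rfl⟩),
    ← intervalIntegral.integral_add_adjacent_intervals
      (intervalIntegrable_of_mem_Icc hsource ⟨le_rfl, ht⟩ ha_mem)
      (intervalIntegrable_of_mem_Icc hsource ha_mem ⟨ht, le_rfl⟩)]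
  ring

theorem restartDatum_eq (hz : IsMildSolution lam G z₀ z) (ha : 0 ≤ a) (hx : a ≤ x) :
    restartDatum lam G z₀ z ℓ a b x = z ℓ a (x - a)
      + (∫ u in (0 : ℝ)..a, G (x - u) * boundarySlope z (ℓ + 1) u)
      - ∫ u in (0 : ℝ)..a, G (x - u) * activeSlope z (ℓ + 1) b u := by
  rw [hz.eq ℓ a ha (x - a) (sub_nonneg.2 hx), restartDatum, add_sub_cancel]
  ring

theorem integral_abs_activeSlope_le (ha : 0 ≤ a) :
    ∫ u in (0 : ℝ)..a, |activeSlope z k b u| ≤ ∫ u in (0 : ℝ)..a, |boundarySlope z k u| := by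
  by_cases hk : IntervalIntegrable (boundarySlope z k) volume 0 b
  · rw [activeSlope_of_intervalIntegrable hk]
  · simp only [activeSlope_of_not_intervalIntegrable hk, Pi.zero_apply, abs_zero,
      intervalIntegral.integral_zero]
    exact intervalIntegral.integral_nonneg ha fun _ _ => abs_nonneg _

theorem exists_lipschitzOnWith_restartDatum (h : IsHydroData lam G K)
    (hz : IsMildSolution lam G z₀ z) (ℓ : ℕ) (ha : 0 ≤ a) :
    ∃ c, LipschitzOnWith c (z ℓ a) (Ici 0) ∧
      ∀ b, LipschitzOnWith c (restartDatum lam G z₀ z ℓ a b) (Ici a) := by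
  obtain ⟨N, hN⟩ := hz.lipschitz ℓ a ha
  set I := ∫ u in (0 : ℝ)..a, |boundarySlope z (ℓ + 1) u|
  have hI : 0 ≤ I := intervalIntegral.integral_nonneg ha fun _ _ => abs_nonneg _
  have hNc : N ≤ N + 2 * K * I.toNNReal := le_self_add
  refine ⟨N + 2 * K * I.toNNReal, hN.weaken hNc, fun b =>
    LipschitzOnWith.of_dist_le_mul fun x (hx : a ≤ x) x' (hx' : a ≤ x') => ?_⟩
  have hzx : |z ℓ a (x - a) - z ℓ a (x' - a)| ≤ N * |x - x'| := by
    simpa only [Real.dist_eq, sub_sub_sub_cancel_right] using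
      hN.dist_le_mul _ (mem_Ici.2 (sub_nonneg.2 hx)) _ (mem_Ici.2 (sub_nonneg.2 hx'))
  have hslope := h.abs_integral_kernel_mul_sub_le (f := boundarySlope z (ℓ + 1)) ha hx hx'
  have hactive := (h.abs_integral_kernel_mul_sub_le (f := activeSlope z (ℓ + 1) b) ha hx hx').trans
    (mul_le_mul_of_nonneg_right (mul_le_mul_of_nonneg_left
      (integral_abs_activeSlope_le ha) K.coe_nonneg) (abs_nonneg _))
  rw [hz.restartDatum_eq ha hx, hz.restartDatum_eq ha hx', Real.dist_eq, Real.dist_eq,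
    NNReal.coe_add, NNReal.coe_mul, Real.coe_toNNReal I hI, sub_sub_sub_comm, add_sub_add_comm]
  calc _ ≤ N * |x - x'| + K * I * |x - x'| + K * I * |x - x'| :=
        (abs_sub _ _).trans (add_le_add ((abs_add_le _ _).trans (add_le_add hzx hslope)) hactive)
    _ = (N + (2 : NNReal) * K * I) * |x - x'| := by rw [NNReal.coe_ofNat]; ring

theorem abs_sub_le_of_abs_hydroSource_sub_le (h : IsHydroData lam G K)
    (hz : IsMildSolution lam G z₀ z) {c : NNReal} {θ : ℝ → ℝ} (ha : 0 ≤ a) (hat : a ≤ t)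
    (htb : t ≤ b) (hp : a < t → Persists z (ℓ + 1) t b) (hca : LipschitzOnWith c (z ℓ a) (Ici 0))
    (hc : LipschitzOnWith c (restartDatum lam G z₀ z ℓ a b) (Ici a)) (hx : t ≤ x) (hx' : t ≤ x')
    (hθ : IntervalIntegrable (fun u => lam u * θ u) volume a t)
    (hsource : ∀ u ∈ Icc a t,
      |hydroSource G z ℓ u (x - u) - hydroSource G z ℓ u (x' - u)| ≤ θ u) :
    |z ℓ t (x - t) - z ℓ t (x' - t)| ≤
      (c + K * ∫ u in a..t, |activeSlope z (ℓ + 1) b u|) * |x - x'| + ∫ u in a..t, lam u * θ u := by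
  rcases hat.eq_or_lt with rfl | hat'
  · simpa only [intervalIntegral.integral_same, mul_zero, add_zero, Real.dist_eq,
      sub_sub_sub_cancel_right] using
      hca.dist_le_mul _ (mem_Ici.2 (sub_nonneg.2 hx)) _ (mem_Ici.2 (sub_nonneg.2 hx'))
  have hdatum : |restartDatum lam G z₀ z ℓ a b x - restartDatum lam G z₀ z ℓ a b x'| ≤
      c * |x - x'| := hc.dist_le_mul x (hat.trans hx) x' (hat.trans hx')
  have hslope := h.abs_integral_kernel_mul_sub_le (f := activeSlope z (ℓ + 1) b) hat hx hx'
  have hint : ∀ {y}, t ≤ y →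
      IntervalIntegrable (fun u => lam u * hydroSource G z ℓ u (y - u)) volume a t := fun hy =>
    intervalIntegrable_of_mem_Icc (hz.intervalIntegrable_rate_mul_hydroSource_sub h ℓ
      (ha.trans hat) hy) ⟨ha, hat⟩ ⟨ha.trans hat, le_rfl⟩
  have harrival : |(∫ u in a..t, lam u * hydroSource G z ℓ u (x - u))
      - ∫ u in a..t, lam u * hydroSource G z ℓ u (x' - u)| ≤ ∫ u in a..t, lam u * θ u := by
    rw [← intervalIntegral.integral_sub (hint hx) (hint hx'), ← Real.norm_eq_abs]
    refine intervalIntegral.norm_integral_le_of_norm_le hat (.of_forall fun u hu => ?_) hθ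
    have hlam := h.rate_nonneg u (ha.trans hu.1.le)
    rw [← mul_sub, Real.norm_eq_abs, abs_mul, abs_of_nonneg hlam]
    exact mul_le_mul_of_nonneg_left (hsource u ⟨hu.1.le, hu.2⟩) hlam
  rw [hz.eq_restart h ha hat htb (hp hat') hx, hz.eq_restart h ha hat htb (hp hat') hx',
    add_sub_add_comm, sub_sub_sub_comm, add_mul]
  exact (abs_add_le _ _).trans
    (add_le_add ((abs_sub _ _).trans (add_le_add hdatum hslope)) harrival)

end IsMildSolution

namespace IsMildSolution

variable {lam G : ℝ → ℝ} {K : NNReal} {z₀ : ℕ → ℝ → ℝ} {z : ℕ → ℝ → ℝ → ℝ}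
  {k ℓ : ℕ} {a b : ℝ}

theorem exists_abs_sub_le_add_integral_of_previous (h : IsHydroData lam G K)
    (hz : IsMildSolution lam G z₀ z) {N : NNReal} (ha : 0 ≤ a) (hab : a ≤ b)
    (hp : ∀ t ∈ Ioc a b, Persists z (ℓ + 1) t b)
    (hprev : ∀ u ∈ Icc a b, ∀ j, j + 1 = ℓ → LipschitzOnWith N (z j u) (Ici 0)) :
    ∃ C ≥ 0, ∀ t ∈ Icc a b, ∀ x ≥ t, ∀ x' ≥ t, ∀ φ : ℝ → ℝ, ContinuousOn φ (Icc a t) →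
      (∀ u ∈ Icc a t, |z ℓ u (x - u) - z ℓ u (x' - u)| ≤ φ u) →
      |z ℓ t (x - t) - z ℓ t (x' - t)| ≤ C * |x - x'| + ∫ u in a..t, 2 * lam u * φ u := by
  obtain ⟨c, hca, hc⟩ := hz.exists_lipschitzOnWith_restartDatum h ℓ ha
  have hb_mem : b ∈ Icc a b := ⟨hab, le_rfl⟩
  have hlam_nonneg : ∀ u ∈ Icc a b, 0 ≤ lam u := fun u hu => h.rate_nonneg u (ha.trans hu.1)
  have hslope : IntervalIntegrable (fun u => |activeSlope z (ℓ + 1) b u|) volume a b :=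
    (intervalIntegrable_of_mem_Icc intervalIntegrable_activeSlope ⟨ha, hab⟩
      ⟨ha.trans hab, le_rfl⟩).abs
  refine ⟨c + K * (∫ u in a..b, |activeSlope z (ℓ + 1) b u|) + (K + 2 * N) * ∫ u in a..b, lam u,
    ?_, fun t ht x hx x' hx' φ hφ hφz => ?_⟩
  · have hI := intervalIntegral.integral_nonneg (f := fun u => |activeSlope z (ℓ + 1) b u|)
      (μ := volume) hab fun _ _ => abs_nonneg _
    have hΛ := intervalIntegral.integral_nonneg (μ := volume) hab hlam_nonneg
    positivity
  have hlam := h.intervalIntegrable_rate ha ht.1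
  have hlamφ : IntervalIntegrable (fun u => 2 * lam u * φ u) volume a t :=
    (hlam.const_mul 2).mul_continuousOn (by rwa [uIcc_of_le ht.1])
  have hsplit : (fun u => lam u * ((K + 2 * N) * |x - x'| + 2 * φ u)) =
      fun u => (K + 2 * N) * |x - x'| * lam u + 2 * lam u * φ u := by
    funext u; ring
  have hincrement := hz.abs_sub_le_of_abs_hydroSource_sub_le h
    (θ := fun u => (K + 2 * N) * |x - x'| + 2 * φ u) ha ht.1 ht.2 (fun hat => hp t ⟨hat, ht.2⟩)
    hca (hc b) hx hx' (by rw [hsplit]; exact (hlam.const_mul _).add hlamφ) fun u hu => by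
      have hsource := hz.abs_hydroSource_sub_le h (hprev u ⟨hu.1, hu.2.trans ht.2⟩)
        (ha.trans hu.1) (sub_nonneg.2 (hu.2.trans hx)) (sub_nonneg.2 (hu.2.trans hx'))
      rw [sub_sub_sub_cancel_right] at hsource
      linarith [hφz u hu]
  rw [hsplit, intervalIntegral.integral_add (hlam.const_mul _) hlamφ,
    intervalIntegral.integral_const_mul] at hincrement
  calc _ ≤ _ := hincrement
    _ = (c + K * (∫ u in a..t, |activeSlope z (ℓ + 1) b u|) + (K + 2 * N) * ∫ u in a..t, lam u)
        * |x - x'| + ∫ u in a..t, 2 * lam u * φ u := by ring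
    _ ≤ _ := by
      gcongr
      · exact monotoneOn_intervalIntegral hslope (fun _ _ => abs_nonneg _) ht hb_mem ht.2
      · exact monotoneOn_intervalIntegral (h.intervalIntegrable_rate ha hab) hlam_nonneg ht hb_mem
          ht.2

theorem exists_lipschitzOnWith_of_previous (h : IsHydroData lam G K)
    (hz : IsMildSolution lam G z₀ z) {N : NNReal} (ha : 0 ≤ a) (hab : a ≤ b)
    (hp : ∀ t ∈ Ioc a b, Persists z (ℓ + 1) t b)
    (hprev : ∀ u ∈ Icc a b, ∀ j, j + 1 = ℓ → LipschitzOnWith N (z j u) (Ici 0)) :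
    ∃ N', ∀ u ∈ Icc a b, LipschitzOnWith N' (z ℓ u) (Ici 0) := by
  obtain ⟨C, hC, hstep⟩ := hz.exists_abs_sub_le_add_integral_of_previous h ha hab hp hprev
  have hlam₂ : ∀ u ∈ Icc a b, 0 ≤ 2 * lam u := fun u hu =>
    mul_nonneg zero_le_two (h.rate_nonneg u (ha.trans hu.1))
  refine ⟨(2 * C * Real.exp (2 * ∫ u in a..b, 2 * lam u)).toNNReal, fun s hs =>
    LipschitzOnWith.of_dist_le' fun r (hr : 0 ≤ r) r' (hr' : 0 ≤ r') => ?_⟩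
  -- Along the characteristics through `(s, r)` and `(s, r')`, the difference is at most `2`.
  have hgronwall := forall_le_exp_of_forall_le_integral (ι := Unit) (C := C * |r - r'|)
    (f := fun _ t => |z ℓ t (s + r - t) - z ℓ t (s + r' - t)|)
    ((h.intervalIntegrable_rate ha hs.1).const_mul 2)
    (fun u hu => hlam₂ u ⟨hu.1, hu.2.trans hs.2⟩) (by positivity)
    ⟨1 + 1, fun _ t ht => (abs_sub _ _).trans <| add_le_add
      (hz.abs_le_one ℓ t (ha.trans ht.1) _ (by linarith [ht.2]))
      (hz.abs_le_one ℓ t (ha.trans ht.1) _ (by linarith [ht.2]))⟩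
    (fun φ hφ _ hφz _ t ht => by
      have hle := hstep t ⟨ht.1, ht.2.trans hs.2⟩ (s + r) (by linarith [ht.2]) (s + r')
        (by linarith [ht.2]) φ (hφ.mono (Icc_subset_Icc_right ht.2))
        fun u hu => hφz () u ⟨hu.1, hu.2.trans ht.2⟩
      rwa [add_sub_add_left_eq_sub] at hle) () ⟨hs.1, le_rfl⟩
  simp only [add_sub_cancel_left] at hgronwall
  calc |z ℓ s r - z ℓ s r'| ≤ _ := hgronwall
    _ ≤ 2 * (C * |r - r'|) * Real.exp (2 * ∫ u in a..b, 2 * lam u) := by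
      gcongr
      exact monotoneOn_intervalIntegral ((h.intervalIntegrable_rate ha hab).const_mul 2) hlam₂ hs
        ⟨hab, le_rfl⟩ hs.2
    _ = _ := by rw [Real.dist_eq]; ring

theorem exists_lipschitzOnWith_of_persists (h : IsHydroData lam G K)
    (hz : IsMildSolution lam G z₀ z) (ha : 0 ≤ a) (hab : a ≤ b) (k : ℕ)
    (hp : ∀ i < k, ∀ t ∈ Ioc a b, Persists z (i + 1) t b) :
    ∃ N, ∀ i < k, ∀ u ∈ Icc a b, LipschitzOnWith N (z i u) (Ici 0) := by
  induction k with
  | zero => exact ⟨0, fun _ hi => absurd hi (Nat.not_lt_zero _)⟩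
  | succ k ih =>
    obtain ⟨N, hN⟩ := ih fun i hi => hp i (hi.trans k.lt_succ_self)
    obtain ⟨N', hN'⟩ := hz.exists_lipschitzOnWith_of_previous h ha hab (hp k k.lt_succ_self)
      fun u hu j hj => hN j (hj ▸ j.lt_succ_self) u hu
    refine ⟨max N N', fun i hi u hu => ?_⟩
    rcases Nat.lt_succ_iff_lt_or_eq.1 hi with hik | rfl
    · exact (hN i hik u hu).weaken (le_max_left _ _)
    · exact (hN' u hu).weaken (le_max_right _ _)

theorem persists_of_lipschitzOnWith (hz : IsMildSolution lam G z₀ z) {N : NNReal} (ha : 0 ≤ a)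
    (hab : a ≤ b) (hN : ∀ u ∈ Ico a b, LipschitzOnWith N (z k u) (Ici 0)) :
    Persists z k a b := by
  refine fun hk => hk.trans ?_
  rw [intervalIntegrable_iff_integrableOn_Ico_of_le hab]
  have hsub : Ico a b ⊆ Ici 0 := fun u hu => ha.trans hu.1
  exact .of_bound measure_Ico_lt_top ((hz.aestronglyMeasurable_boundarySlope k).mono_set hsub) N
    (ae_restrict_of_forall_mem measurableSet_Ico fun u hu =>
      abs_derivWithin_zero_le_of_lipschitzOnWith (hN u hu))

theorem eventually_forall_lt_persists (h : IsHydroData lam G K) (hz : IsMildSolution lam G z₀ z)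
    (ha : 0 ≤ a) (k : ℕ) : ∀ᶠ b in nhdsWithin a (Ioi a), ∀ i < k, Persists z i a b := by
  have hstable : ∀ᶠ b in nhdsWithin a (Ioi a), ∀ i < k, ∀ t ∈ Ioc a b, Persists z (i + 1) t b :=
    (Filter.eventually_all_finite (finite_lt_nat k)).2 fun i _ =>
      eventually_forall_persists z (i + 1) ha
  filter_upwards [hstable, self_mem_nhdsWithin] with b hb hab i hi
  have hab' : a ≤ b := le_of_lt hab
  obtain ⟨N, hN⟩ := hz.exists_lipschitzOnWith_of_persists h ha hab' k hb
  exact hz.persists_of_lipschitzOnWith ha hab' fun u hu => hN i hi u ⟨hu.1, hu.2.le⟩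

end IsMildSolution

theorem lipschitzOnWith_iff_forall_div_le {f : ℝ → ℝ} {N : NNReal} {s : Set ℝ} :
    LipschitzOnWith N f s ↔ ∀ x ∈ s, ∀ y ∈ s, |f x - f y| / |x - y| ≤ N := by
  simp only [lipschitzOnWith_iff_dist_le_mul, Real.dist_eq]
  refine forall₂_congr fun x _ => forall₂_congr fun y _ => ⟨fun hle => ?_, fun hle => ?_⟩
  · exact div_le_of_le_mul₀ (abs_nonneg _) N.coe_nonneg hle
  · rcases eq_or_ne x y with rfl | hne
    · simp only [sub_self, abs_zero, mul_zero, le_refl]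
    · exact (div_le_iff₀ (abs_pos.2 (sub_ne_zero.2 hne))).1 hle

theorem lipschitzOnWith_exp_of_forall_lipschitzOnWith_add_integral {ι : Type*}
    {f : ι → ℝ → ℝ → ℝ} {S : Set ℝ} {w : ℝ → ℝ} {a b C t : ℝ}
    (hw : IntervalIntegrable w volume a b) (hw₀ : ∀ u ∈ Icc a b, 0 ≤ w u) (hC : 0 ≤ C)
    (hf : ∃ N, ∀ i, ∀ t ∈ Icc a b, LipschitzOnWith N (f i t) S)
    (h : ∀ φ : ℝ → ℝ, ContinuousOn φ (Icc a b) → (∀ u ∈ Icc a b, 0 ≤ φ u) →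
      (∀ j, ∀ u ∈ Icc a b, LipschitzOnWith (φ u).toNNReal (f j u) S) → ∀ i, ∀ t ∈ Icc a b,
        LipschitzOnWith (C + ∫ u in a..t, w u * φ u).toNNReal (f i t) S)
    (i : ι) (ht : t ∈ Icc a b) :
    LipschitzOnWith (2 * C * Real.exp (2 * ∫ u in a..t, w u)).toNNReal (f i t) S := by
  obtain ⟨N, hN⟩ := hf
  refine lipschitzOnWith_iff_forall_div_le.2 fun x hx y hy => ?_
  refine (forall_le_exp_of_forall_le_integral
    (f := fun (p : ι × S × S) u => |f p.1 u p.2.1 - f p.1 u p.2.2| / |(p.2.1 : ℝ) - p.2.2|)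
    hw hw₀ hC ⟨N, fun p u hu => lipschitzOnWith_iff_forall_div_le.1 (hN p.1 u hu) _
      p.2.1.2 _ p.2.2.2⟩ (fun φ hφ hφ₀ hφf p u hu => ?_) (i, ⟨x, hx⟩, ⟨y, hy⟩) ht).trans
    (Real.le_coe_toNNReal _)
  have hstep := lipschitzOnWith_iff_forall_div_le.1 (h φ hφ hφ₀ (fun j v hv =>
    lipschitzOnWith_iff_forall_div_le.2 fun x hx y hy =>
      (hφf (j, ⟨x, hx⟩, ⟨y, hy⟩) v hv).trans (Real.le_coe_toNNReal _)) p.1 u hu)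
    _ p.2.1.2 _ p.2.2.2
  have hnonneg : 0 ≤ C + ∫ v in a..u, w v * φ v :=
    add_nonneg hC <| intervalIntegral.integral_nonneg hu.1 fun v hv =>
      mul_nonneg (hw₀ v ⟨hv.1, hv.2.trans hu.2⟩) (hφ₀ v ⟨hv.1, hv.2.trans hu.2⟩)
  rwa [Real.coe_toNNReal _ hnonneg] at hstep

namespace IsMildSolution

variable {lam G : ℝ → ℝ} {K : NNReal} {z₀ : ℕ → ℝ → ℝ} {z : ℕ → ℝ → ℝ → ℝ}
  {k ℓ : ℕ} {a b s t T r r' : ℝ}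

theorem integral_abs_activeSlope_le_of_persists (hs : 0 ≤ s) (hk : Persists z k s T)
    (hb : b ∈ Icc s T) (ht : t ∈ Icc s b) :
    ∫ u in s..t, |activeSlope z k b u| ≤ ∫ u in s..T, |activeSlope z k T u| := by
  have hsT := hb.1.trans hb.2
  by_cases hkb : IntervalIntegrable (boundarySlope z k) volume 0 b
  · have hkT := hk (intervalIntegrable_of_mem_Icc hkb ⟨le_rfl, hs.trans hb.1⟩ ⟨hs, hb.1⟩)
    rw [activeSlope_of_intervalIntegrable hkb, activeSlope_of_intervalIntegrable hkT]
    exact monotoneOn_intervalIntegral (intervalIntegrable_of_mem_Icc hkT ⟨hs, hsT⟩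
      ⟨hs.trans hsT, le_rfl⟩).abs (fun _ _ => abs_nonneg _) ⟨ht.1, ht.2.trans hb.2⟩
      ⟨hsT, le_rfl⟩ (ht.2.trans hb.2)
  · simp only [activeSlope_of_not_intervalIntegrable hkb, Pi.zero_apply, abs_zero,
      intervalIntegral.integral_zero]
    exact intervalIntegral.integral_nonneg hsT fun _ _ => abs_nonneg _

theorem integral_abs_activeSlope_succ_le (hs : 0 ≤ s) (hk : Persists z k s T)
    (hb : b ∈ Icc s T) (ht : t ∈ Icc s b) {φ : ℝ → ℝ} (hφ : ContinuousOn φ (Icc s b))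
    (hφ₀ : ∀ u ∈ Icc s b, 0 ≤ φ u)
    (hφz : ∀ j < k, ∀ u ∈ Icc s b, LipschitzOnWith (φ u).toNNReal (z j u) (Ici 0)) (hℓ : ℓ < k) :
    ∫ u in s..t, |activeSlope z (ℓ + 1) b u| ≤
      (∫ u in s..T, |activeSlope z k T u|) + ∫ u in s..t, φ u := by
  have hsb := hb.1
  have hφ_int : IntervalIntegrable φ volume s t :=
    (hφ.mono (Icc_subset_Icc_right ht.2)).intervalIntegrable_of_Icc ht.1
  rcases Nat.lt_or_eq_of_le (Nat.succ_le_of_lt hℓ) with hlt | rfl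
  · have hslope_int : IntervalIntegrable (activeSlope z (ℓ + 1) b) volume s t :=
      intervalIntegrable_of_mem_Icc intervalIntegrable_activeSlope ⟨hs, hsb⟩
        ⟨hs.trans ht.1, ht.2⟩
    have hslope : ∫ u in s..t, |activeSlope z (ℓ + 1) b u| ≤ ∫ u in s..t, φ u :=
      intervalIntegral.integral_mono_on ht.1 hslope_int.abs hφ_int fun u hu => by
        have hu' : u ∈ Icc s b := ⟨hu.1, hu.2.trans ht.2⟩
        exact (abs_activeSlope_le_abs_boundarySlope u).trans <|
          (abs_derivWithin_zero_le_of_lipschitzOnWith (hφz _ hlt u hu')).trans_eq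
            (Real.coe_toNNReal _ (hφ₀ u hu'))
    have hE := intervalIntegral.integral_nonneg (μ := volume) (hb.1.trans hb.2)
      fun u _ => abs_nonneg (activeSlope z k T u)
    linarith
  · have hφ_nonneg := intervalIntegral.integral_nonneg (μ := volume) ht.1
      fun u hu => hφ₀ u ⟨hu.1, hu.2.trans ht.2⟩
    linarith [integral_abs_activeSlope_le_of_persists hs hk hb ht]

theorem abs_sub_le_of_lipschitzOnWith (h : IsHydroData lam G K) (hz : IsMildSolution lam G z₀ z)
    {c : NNReal} {φ : ℝ → ℝ} (ha : 0 ≤ a) (hat : a ≤ t) (htb : t ≤ b)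
    (hp : a < t → Persists z (ℓ + 1) t b) (hca : LipschitzOnWith c (z ℓ a) (Ici 0))
    (hc : LipschitzOnWith c (restartDatum lam G z₀ z ℓ a b) (Ici a)) (hr : 0 ≤ r) (hr' : 0 ≤ r')
    (hφ : ContinuousOn φ (Icc a t)) (hφ₀ : ∀ u ∈ Icc a t, 0 ≤ φ u)
    (hφz : ∀ j ≤ ℓ, ∀ u ∈ Icc a t, LipschitzOnWith (φ u).toNNReal (z j u) (Ici 0)) :
    |z ℓ t r - z ℓ t r'| ≤ (c + K * (∫ u in a..t, |activeSlope z (ℓ + 1) b u|)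
      + K * (∫ u in a..t, lam u) + 4 * ∫ u in a..t, lam u * φ u) * |r - r'| := by
  have hlam := h.intervalIntegrable_rate ha hat
  have hlamφ : IntervalIntegrable (fun u => lam u * φ u) volume a t :=
    hlam.mul_continuousOn (by rwa [uIcc_of_le hat])
  have hsplit : (fun u => lam u * ((K + 4 * φ u) * |r - r'|)) =
      fun u => (K * lam u + 4 * (lam u * φ u)) * |r - r'| := by
    funext u; ring
  have hincrement := hz.abs_sub_le_of_abs_hydroSource_sub_le h (x := t + r) (x' := t + r')
    (θ := fun u => (K + 4 * φ u) * |r - r'|) ha hat htb hp hca hc (by linarith) (by linarith)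
    (by rw [hsplit]; exact ((hlam.const_mul _).add (hlamφ.const_mul _)).mul_const _) fun u hu => by
      have hx : t + r - u ∈ Ici 0 := mem_Ici.2 (by linarith [hu.2])
      have hx' : t + r' - u ∈ Ici 0 := mem_Ici.2 (by linarith [hu.2])
      have hsource := hz.abs_hydroSource_sub_le h (ℓ := ℓ) (fun j hj => hφz j (by omega) u hu)
        (ha.trans hu.1) hx hx'
      have hlip := (hφz ℓ le_rfl u hu).dist_le_mul _ hx _ hx'
      rw [Real.dist_eq, Real.dist_eq] at hlip
      rw [sub_sub_sub_cancel_right, add_sub_add_left_eq_sub, Real.coe_toNNReal _ (hφ₀ u hu)]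
        at hsource hlip
      linarith
  rw [hsplit, intervalIntegral.integral_mul_const, intervalIntegral.integral_add
    (hlam.const_mul _) (hlamφ.const_mul _), intervalIntegral.integral_const_mul,
    intervalIntegral.integral_const_mul, add_sub_cancel_left, add_sub_cancel_left,
    add_sub_add_left_eq_sub] at hincrement
  linarith

theorem exists_lipschitzOnWith_add_integral (h : IsHydroData lam G K)
    (hz : IsMildSolution lam G z₀ z) (hs : 0 ≤ s) (hsT : s ≤ T) (hk : Persists z k s T) :
    ∃ C ≥ 0, ∀ b ∈ Icc s T, (∀ i ≤ k, Persists z i s b) → ∀ φ : ℝ → ℝ,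
      ContinuousOn φ (Icc s b) → (∀ u ∈ Icc s b, 0 ≤ φ u) →
      (∀ j < k, ∀ u ∈ Icc s b, LipschitzOnWith (φ u).toNNReal (z j u) (Ici 0)) →
      ∀ i < k, ∀ t ∈ Icc s b,
        LipschitzOnWith (C + ∫ u in s..t, (K + 4 * lam u) * φ u).toNNReal (z i t) (Ici 0) := by
  choose c hca hc using fun i => hz.exists_lipschitzOnWith_restartDatum h i hs
  have hlam_nonneg : ∀ u ∈ Icc s T, 0 ≤ lam u := fun u hu => h.rate_nonneg u (hs.trans hu.1)
  refine ⟨(Finset.range k).sup c + K * (∫ u in s..T, |activeSlope z k T u|)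
    + K * ∫ u in s..T, lam u, ?_, fun b hb hp φ hφ hφ₀ hφz i hi t ht =>
    LipschitzOnWith.of_dist_le' fun r (hr : 0 ≤ r) r' (hr' : 0 ≤ r') => ?_⟩
  · have hE := intervalIntegral.integral_nonneg (μ := volume) hsT
      fun u _ => abs_nonneg (activeSlope z k T u)
    have hΛ := intervalIntegral.integral_nonneg (μ := volume) hsT hlam_nonneg
    positivity
  have hci : c i ≤ (Finset.range k).sup c := Finset.le_sup (Finset.mem_range.2 hi)
  have hsub : Icc s t ⊆ Icc s b := Icc_subset_Icc_right ht.2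
  have hlam := h.intervalIntegrable_rate hs ht.1
  have hφt : ContinuousOn φ (uIcc s t) := by
    rw [uIcc_of_le ht.1]; exact hφ.mono hsub
  have hincrement := hz.abs_sub_le_of_lipschitzOnWith h hs ht.1 ht.2
    (fun _ => (hp (i + 1) hi).mono ht ⟨hb.1, le_rfl⟩ hs) ((hca i).weaken hci)
    ((hc i b).weaken hci) hr hr' (hφ.mono hsub) (fun u hu => hφ₀ u (hsub hu))
    fun j hj u hu => hφz j (hj.trans_lt hi) u (hsub hu)
  have hslope := integral_abs_activeSlope_succ_le hs hk hb ht hφ hφ₀ hφz hi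
  have hΛ : ∫ u in s..t, lam u ≤ ∫ u in s..T, lam u :=
    monotoneOn_intervalIntegral (h.intervalIntegrable_rate hs hsT) hlam_nonneg
      ⟨ht.1, ht.2.trans hb.2⟩ ⟨hsT, le_rfl⟩ (ht.2.trans hb.2)
  refine hincrement.trans (mul_le_mul_of_nonneg_right ?_ (abs_nonneg _))
  simp only [add_mul, mul_assoc]
  rw [intervalIntegral.integral_add (hφt.intervalIntegrable.const_mul _)
    ((hlam.mul_continuousOn hφt).const_mul _), intervalIntegral.integral_const_mul,
    intervalIntegral.integral_const_mul]
  linarith [mul_le_mul_of_nonneg_left hslope K.coe_nonneg,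
    mul_le_mul_of_nonneg_left hΛ K.coe_nonneg]

theorem exists_lipschitzOnWith_of_forall_Ico_persists (h : IsHydroData lam G K)
    (hz : IsMildSolution lam G z₀ z) (hs : 0 ≤ s) (hk : Persists z k s T) (ha : a ∈ Icc s T)
    (hp : ∀ t ∈ Ico s a, ∀ i < k, Persists z i s t) :
    ∃ N, ∀ i < k, ∀ t ∈ Ico s a, LipschitzOnWith N (z i t) (Ici 0) := by
  have hsT := ha.1.trans ha.2
  obtain ⟨C, hC, hbound⟩ := hz.exists_lipschitzOnWith_add_integral h hs hsT hk
  set w : ℝ → ℝ := fun u => K + 4 * lam u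
  have hw : IntervalIntegrable w volume s T :=
    intervalIntegrable_const.add ((h.intervalIntegrable_rate hs hsT).const_mul 4)
  have hw₀ : ∀ u ∈ Icc s T, 0 ≤ w u := fun u hu =>
    add_nonneg K.coe_nonneg (mul_nonneg four_pos.le (h.rate_nonneg u (hs.trans hu.1)))
  refine ⟨(2 * C * Real.exp (2 * ∫ u in s..T, w u)).toNNReal, fun i hi t ht => ?_⟩
  have htT : t ∈ Icc s T := ⟨ht.1, ht.2.le.trans ha.2⟩
  have hpt : ∀ i ≤ k, Persists z i s t := fun i hik => (hik.lt_or_eq).elim (hp t ht i) fun hik =>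
    hik ▸ hk.mono ⟨le_rfl, hsT⟩ htT hs
  obtain ⟨N, hN⟩ := hz.exists_lipschitzOnWith_of_persists h hs ht.1 k fun i hi u hu =>
    (hpt (i + 1) hi).mono ⟨hu.1.le, hu.2⟩ ⟨ht.1, le_rfl⟩ hs
  have hgronwall := lipschitzOnWith_exp_of_forall_lipschitzOnWith_add_integral
    (f := fun (i : Finset.range k) => z i)
    (intervalIntegrable_of_mem_Icc hw ⟨le_rfl, hsT⟩ htT)
    (fun u hu => hw₀ u ⟨hu.1, hu.2.trans htT.2⟩) hC
    ⟨N, fun i u hu => hN i (Finset.mem_range.1 i.2) u hu⟩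
    (fun φ hφ hφ₀ hφz i u hu => hbound t htT hpt φ hφ hφ₀
      (fun j hj => hφz ⟨j, Finset.mem_range.2 hj⟩) i (Finset.mem_range.1 i.2) u hu)
    ⟨i, Finset.mem_range.2 hi⟩ ⟨ht.1, le_rfl⟩
  refine hgronwall.weaken (Real.toNNReal_le_toNNReal ?_)
  gcongr
  exact monotoneOn_intervalIntegral hw hw₀ htT ⟨hsT, le_rfl⟩ htT.2

theorem persists_of_lt (h : IsHydroData lam G K) (hz : IsMildSolution lam G z₀ z) (hs : 0 ≤ s)
    (hsT : s ≤ T) (hk : Persists z k s T) (hℓ : ℓ < k) : Persists z ℓ s T := by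
  have hall : ∀ i < k, Persists z i s T := by
    refine real_induction_Icc (s := s) (T := T) (Q := fun t => ∀ i < k, Persists z i s t)
      (fun a ha hQ i hi => ?_) (fun a ha hQ => ?_) ⟨hsT, le_rfl⟩
    · obtain ⟨N, hN⟩ := hz.exists_lipschitzOnWith_of_forall_Ico_persists h hs hk ha hQ
      exact hz.persists_of_lipschitzOnWith hs ha.1 (hN i hi)
    · obtain ⟨b, hb, hab⟩ := ((hz.eventually_forall_lt_persists h (hs.trans ha.1) k).and
        self_mem_nhdsWithin).exists
      exact ⟨b, hab, fun u hu i hi => (hQ a ⟨ha.1, le_rfl⟩ i hi).trans <|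
        (hb i hi).mono ⟨le_rfl, hu.1.le.trans hu.2⟩ ⟨hu.1.le, hu.2⟩ (hs.trans ha.1)⟩
  exact hall ℓ hℓ

theorem exists_forall_persists (h : IsHydroData lam G K) (hz : IsMildSolution lam G z₀ z)
    (ha : 0 ≤ a) : ∃ b > a, ∀ k, Persists z k a b := by
  by_contra! hfail
  obtain ⟨k, hk⟩ := hfail (a + 1) (lt_add_one a)
  obtain ⟨t, hpt, hta, hat⟩ := ((hz.eventually_forall_lt_persists h ha (k + 1)).and
    (Ioc_mem_nhdsGT (lt_add_one a))).exists
  obtain ⟨j, hj⟩ := hfail t hta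
  have hkj : k < j := by
    by_contra! hjk
    exact hj (hpt j (Nat.lt_succ_of_le hjk))
  have hjt : Persists z j t (a + 1) := fun hint => absurd (fun _ => hint) hj
  exact hk ((hpt k k.lt_succ_self).trans
    (hz.persists_of_lt h (ha.trans hta.le) hat hjt hkj))

end IsMildSolution

/-- The families `z` and `z'` coincide at all levels and all times up to `a`. -/
def AgreeUpTo (z z' : ℕ → ℝ → ℝ → ℝ) (a : ℝ) : Prop :=
  ∀ ℓ, ∀ t ∈ Icc 0 a, EqOn (z ℓ t) (z' ℓ t) (Ici 0)

namespace AgreeUpTo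

variable {z z' : ℕ → ℝ → ℝ → ℝ} {k : ℕ} {a u : ℝ}

theorem boundarySlope_eq (hagree : AgreeUpTo z z' a) (hu : u ∈ Icc 0 a) :
    boundarySlope z k u = boundarySlope z' k u :=
  derivWithin_congr (hagree k u hu) (hagree k u hu self_mem_Ici)

theorem hydroSource_eq (hagree : AgreeUpTo z z' a) {G : ℝ → ℝ} (hu : u ∈ Icc 0 a) {r : ℝ}
    (hr : 0 ≤ r) : hydroSource G z k u r = hydroSource G z' k u r := by
  cases k with
  | zero => simp only [hydroSource, hagree 0 u hu self_mem_Ici]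
  | succ k =>
    simp only [hydroSource, hagree _ u hu self_mem_Ici, hagree _ u hu (mem_Ici.2 hr)]

end AgreeUpTo

/-- Two mild solutions with the same data which agree up to time `a`, and such that no boundary
slope of either loses its integrability between the times `a` and `b`. -/
structure IsForkedPair (lam G : ℝ → ℝ) (K : NNReal) (z₀ : ℕ → ℝ → ℝ) (z z' : ℕ → ℝ → ℝ → ℝ)
    (a b : ℝ) : Prop where
  data : IsHydroData lam G K
  left : IsMildSolution lam G z₀ z
  right : IsMildSolution lam G z₀ z'
  nonneg : 0 ≤ a
  le : a ≤ b
  agree : AgreeUpTo z z' a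
  persists_left : ∀ k, Persists z k a b
  persists_right : ∀ k, Persists z' k a b

/-- The difference of the boundary slopes of level `k` of `z` and `z'` active on `[0, b]`. -/
noncomputable def slopeGap (z z' : ℕ → ℝ → ℝ → ℝ) (k : ℕ) (b u : ℝ) : ℝ :=
  activeSlope z k b u - activeSlope z' k b u

/-- The source term of the transport equation solved by the difference of level `ℓ` of `z` and
`z'`. -/
noncomputable def gapSource (lam G : ℝ → ℝ) (z z' : ℕ → ℝ → ℝ → ℝ) (ℓ : ℕ) (b u r : ℝ) : ℝ :=
  lam u * (hydroSource G z ℓ u r - hydroSource G z' ℓ u r) - G r * slopeGap z z' (ℓ + 1) b u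

namespace IsForkedPair

variable {lam G : ℝ → ℝ} {K : NNReal} {z₀ : ℕ → ℝ → ℝ} {z z' : ℕ → ℝ → ℝ → ℝ}
  {k ℓ : ℕ} {a b t u r r' x : ℝ}

theorem intervalIntegrable_boundarySlope_iff (hp : IsForkedPair lam G K z₀ z z' a b) :
    IntervalIntegrable (boundarySlope z k) volume 0 b ↔
      IntervalIntegrable (boundarySlope z' k) volume 0 b := by
  have hiff : ∀ y, Persists y k a b → (IntervalIntegrable (boundarySlope y k) volume 0 b ↔
      IntervalIntegrable (boundarySlope y k) volume 0 a) := fun y hy =>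
    ⟨fun hint => intervalIntegrable_of_mem_Icc hint ⟨le_rfl, hp.nonneg.trans hp.le⟩
      ⟨hp.nonneg, hp.le⟩, hy⟩
  rw [hiff z (hp.persists_left k), hiff z' (hp.persists_right k)]
  refine intervalIntegrable_congr fun u hu => hp.agree.boundarySlope_eq ?_
  rw [uIoc_of_le hp.nonneg] at hu
  exact ⟨hu.1.le, hu.2⟩

theorem activeSlope_eq (hp : IsForkedPair lam G K z₀ z z' a b) (hu : u ∈ Icc 0 a) :
    activeSlope z k b u = activeSlope z' k b u := by
  by_cases hk : IntervalIntegrable (boundarySlope z k) volume 0 b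
  · rw [activeSlope_of_intervalIntegrable hk, activeSlope_of_intervalIntegrable
      (hp.intervalIntegrable_boundarySlope_iff.1 hk), hp.agree.boundarySlope_eq hu]
  · rw [activeSlope_of_not_intervalIntegrable hk, activeSlope_of_not_intervalIntegrable
      (mt hp.intervalIntegrable_boundarySlope_iff.2 hk)]

theorem slopeGap_eq_zero_or (hp : IsForkedPair lam G K z₀ z z' a b) (k : ℕ) :
    slopeGap z z' k b = 0 ∨
      slopeGap z z' k b = fun u => boundarySlope z k u - boundarySlope z' k u := by
  unfold slopeGap
  by_cases hk : IntervalIntegrable (boundarySlope z k) volume 0 b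
  · rw [activeSlope_of_intervalIntegrable hk, activeSlope_of_intervalIntegrable
      (hp.intervalIntegrable_boundarySlope_iff.1 hk)]
    exact Or.inr rfl
  · rw [activeSlope_of_not_intervalIntegrable hk, activeSlope_of_not_intervalIntegrable
      (mt hp.intervalIntegrable_boundarySlope_iff.2 hk)]
    exact Or.inl (funext fun _ => sub_self _)

theorem intervalIntegrable_slopeGap (hp : IsForkedPair lam G K z₀ z z' a b) (ht : t ∈ Icc a b) :
    IntervalIntegrable (slopeGap z z' k b) volume a t :=
  intervalIntegrable_of_mem_Icc (intervalIntegrable_activeSlope.sub intervalIntegrable_activeSlope)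
    ⟨hp.nonneg, hp.le⟩ ⟨hp.nonneg.trans ht.1, ht.2⟩

theorem intervalIntegrable_rate_mul_hydroSource_sub_hydroSource
    (hp : IsForkedPair lam G K z₀ z z' a b) (ℓ : ℕ) (ht : a ≤ t) {ρ : ℝ → ℝ} (hρ : Measurable ρ)
    (hρ₀ : ∀ u ∈ Icc 0 t, 0 ≤ ρ u) :
    IntervalIntegrable
      (fun u => lam u * (hydroSource G z ℓ u (ρ u) - hydroSource G z' ℓ u (ρ u))) volume a t := by
  have ht₀ := hp.nonneg.trans ht
  simp only [mul_sub]
  exact intervalIntegrable_of_mem_Icc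
    ((hp.left.intervalIntegrable_rate_mul_hydroSource hp.data ℓ ht₀ hρ hρ₀).sub
      (hp.right.intervalIntegrable_rate_mul_hydroSource hp.data ℓ ht₀ hρ hρ₀))
    ⟨hp.nonneg, ht⟩ ⟨ht₀, le_rfl⟩

theorem restartDatum_eq (hp : IsForkedPair lam G K z₀ z z' a b) (hx : a ≤ x) :
    restartDatum lam G z₀ z ℓ a b x = restartDatum lam G z₀ z' ℓ a b x := by
  have hslope : ∫ u in (0 : ℝ)..a, G (x - u) * activeSlope z (ℓ + 1) b u =
      ∫ u in (0 : ℝ)..a, G (x - u) * activeSlope z' (ℓ + 1) b u :=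
    intervalIntegral.integral_congr fun u hu => by
      rw [uIcc_of_le hp.nonneg] at hu
      simp only [hp.activeSlope_eq hu]
  have hsource : ∫ u in (0 : ℝ)..a, lam u * hydroSource G z ℓ u (x - u) =
      ∫ u in (0 : ℝ)..a, lam u * hydroSource G z' ℓ u (x - u) :=
    intervalIntegral.integral_congr fun u hu => by
      rw [uIcc_of_le hp.nonneg] at hu
      simp only [hp.agree.hydroSource_eq hu (sub_nonneg.2 (hu.2.trans hx))]
  rw [restartDatum, restartDatum, hslope, hsource]

theorem sub_eq_integral_gapSource (hp : IsForkedPair lam G K z₀ z z' a b) (ht : t ∈ Icc a b)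
    (hx : t ≤ x) :
    z ℓ t (x - t) - z' ℓ t (x - t) = ∫ u in a..t, gapSource lam G z z' ℓ b u (x - u) := by
  have hmono {y} (hy : ∀ k, Persists y k a b) :=
    (hy (ℓ + 1)).mono ht ⟨hp.le, le_rfl⟩ hp.nonneg
  have hslope y := (hp.data.intervalIntegrable_kernel_mul_iff ht.1 hx).2 <|
    intervalIntegrable_of_mem_Icc (intervalIntegrable_activeSlope (z := y) (k := ℓ + 1) (b := b))
      ⟨hp.nonneg, hp.le⟩ ⟨hp.nonneg.trans ht.1, ht.2⟩
  have hsource {y} (hy : IsMildSolution lam G z₀ y) :=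
    intervalIntegrable_of_mem_Icc (hy.intervalIntegrable_rate_mul_hydroSource_sub hp.data ℓ
      (hp.nonneg.trans ht.1) hx) ⟨hp.nonneg, ht.1⟩ ⟨hp.nonneg.trans ht.1, le_rfl⟩
  simp only [gapSource, slopeGap, mul_sub]
  rw [intervalIntegral.integral_sub ((hsource hp.left).sub (hsource hp.right))
      ((hslope z).sub (hslope z')),
    intervalIntegral.integral_sub (hsource hp.left) (hsource hp.right),
    intervalIntegral.integral_sub (hslope z) (hslope z'),
    hp.left.eq_restart hp.data hp.nonneg ht.1 ht.2 (hmono hp.persists_left) hx,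
    hp.right.eq_restart hp.data hp.nonneg ht.1 ht.2 (hmono hp.persists_right) hx,
    hp.restartDatum_eq (ht.1.trans hx)]
  ring

theorem exists_lipschitzOnWith (hp : IsForkedPair lam G K z₀ z z' a b) (ℓ : ℕ) :
    ∃ N, ∀ i ≤ ℓ, ∀ u ∈ Icc a b,
      LipschitzOnWith N (z i u) (Ici 0) ∧ LipschitzOnWith N (z' i u) (Ici 0) := by
  have hexists {y} (hy : IsMildSolution lam G z₀ y) (hyp : ∀ k, Persists y k a b) :=
    hy.exists_lipschitzOnWith_of_persists hp.data hp.nonneg hp.le (ℓ + 1) fun i _ t ht =>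
      (hyp (i + 1)).mono ⟨ht.1.le, ht.2⟩ ⟨hp.le, le_rfl⟩ hp.nonneg
  obtain ⟨N, hN⟩ := hexists hp.left hp.persists_left
  obtain ⟨N', hN'⟩ := hexists hp.right hp.persists_right
  exact ⟨max N N', fun i hi u hu =>
    ⟨(hN i (Nat.lt_succ_of_le hi) u hu).weaken (le_max_left _ _),
      (hN' i (Nat.lt_succ_of_le hi) u hu).weaken (le_max_right _ _)⟩⟩

theorem intervalIntegrable_kernel_mul_slopeGap (hp : IsForkedPair lam G K z₀ z z' a b)
    (ht : t ∈ Icc a b) (hx : t ≤ x) :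
    IntervalIntegrable (fun u => G (x - u) * slopeGap z z' k b u) volume a t :=
  (hp.data.intervalIntegrable_kernel_mul_iff ht.1 hx).2 (hp.intervalIntegrable_slopeGap ht)

theorem abs_gapSource_sub_le (hp : IsForkedPair lam G K z₀ z z' a b) {N : NNReal} (hu : 0 ≤ u)
    (hN : ∀ i ≤ ℓ, LipschitzOnWith N (z i u) (Ici 0) ∧ LipschitzOnWith N (z' i u) (Ici 0))
    (hr : 0 ≤ r) (hr' : 0 ≤ r') :
    |gapSource lam G z z' ℓ b u r - gapSource lam G z z' ℓ b u r'| ≤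
      (2 * (K + 4 * N) * lam u + K * |slopeGap z z' (ℓ + 1) b u|) * |r - r'| := by
  have hlam := hp.data.rate_nonneg u hu
  have hG : |G r - G r'| ≤ K * |r - r'| := hp.data.lipschitz.dist_le_mul r hr r' hr'
  have hsource {y} (hy : IsMildSolution lam G z₀ y)
      (hyN : ∀ i ≤ ℓ, LipschitzOnWith N (y i u) (Ici 0)) :
      |hydroSource G y ℓ u r - hydroSource G y ℓ u r'| ≤ (K + 4 * N) * |r - r'| := by
    have hlip : |y ℓ u r - y ℓ u r'| ≤ N * |r - r'| := (hyN ℓ le_rfl).dist_le_mul r hr r' hr'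
    linarith [hy.abs_hydroSource_sub_le hp.data (ℓ := ℓ) (fun j hj => hyN j (by omega)) hu hr hr']
  calc |gapSource lam G z z' ℓ b u r - gapSource lam G z z' ℓ b u r'|
      = |lam u * ((hydroSource G z ℓ u r - hydroSource G z ℓ u r')
          - (hydroSource G z' ℓ u r - hydroSource G z' ℓ u r'))
          - (G r - G r') * slopeGap z z' (ℓ + 1) b u| := by unfold gapSource; ring_nf
    _ ≤ lam u * ((K + 4 * N) * |r - r'| + (K + 4 * N) * |r - r'|)
          + K * |r - r'| * |slopeGap z z' (ℓ + 1) b u| := by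
      refine (abs_sub _ _).trans ?_
      rw [abs_mul, abs_mul, abs_of_nonneg hlam]
      gcongr
      exact (abs_sub _ _).trans (add_le_add (hsource hp.left fun i hi => (hN i hi).1)
        (hsource hp.right fun i hi => (hN i hi).2))
    _ = _ := by ring

theorem exists_isLipschitzSource_gapSource (hp : IsForkedPair lam G K z₀ z z' a b) (ℓ : ℕ) :
    ∃ κ, IsLipschitzSource (gapSource lam G z z' ℓ b) κ a b := by
  obtain ⟨N, hN⟩ := hp.exists_lipschitzOnWith ℓ
  have hslope := hp.intervalIntegrable_slopeGap (k := ℓ + 1) ⟨hp.le, le_rfl⟩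
  exact ⟨fun u => 2 * (K + 4 * N) * lam u + K * |slopeGap z z' (ℓ + 1) b u|,
    ((hp.data.intervalIntegrable_rate hp.nonneg hp.le).const_mul _).add (hslope.abs.const_mul _),
    (hp.intervalIntegrable_rate_mul_hydroSource_sub_hydroSource ℓ hp.le (ρ := fun _ => 0)
      measurable_const fun _ _ => le_rfl).sub (hslope.const_mul _),
    fun t ht x hx => (hp.intervalIntegrable_rate_mul_hydroSource_sub_hydroSource ℓ ht.1
      (ρ := fun u => x - u) (by fun_prop) fun u hu => sub_nonneg.2 (hu.2.trans hx)).sub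
      (hp.intervalIntegrable_kernel_mul_slopeGap ht hx),
    fun u hu r hr r' hr' =>
      hp.abs_gapSource_sub_le (hp.nonneg.trans hu.1) (fun i hi => hN i hi u hu) hr hr'⟩

end IsForkedPair

namespace IsForkedPair

variable {lam G : ℝ → ℝ} {K : NNReal} {z₀ : ℕ → ℝ → ℝ} {z z' : ℕ → ℝ → ℝ → ℝ}
  {k ℓ : ℕ} {a b t r x : ℝ} {φ ψ : ℝ → ℝ}

theorem integral_slopeGap (hp : IsForkedPair lam G K z₀ z z' a b) (k : ℕ) :
    slopeGap z z' k b = 0 ∨ ∀ t ∈ Icc a b, ∫ u in a..t, slopeGap z z' k b u =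
      ∫ u in a..t, (gapSource lam G z z' k b u (t - u) - gapSource lam G z z' k b u 0) := by
  refine (hp.slopeGap_eq_zero_or k).imp_right fun hslope t ht => ?_
  obtain ⟨κ, hκ⟩ := hp.exists_isLipschitzSource_gapSource k
  refine hκ.integral_deriv_zero (fun s hs => ?_)
    (hp.intervalIntegrable_slopeGap ⟨hp.le, le_rfl⟩) ht
  have hs₀ := hp.nonneg.trans hs.1
  have hgap : ∀ r ≥ 0, ∫ u in a..s, gapSource lam G z z' k b u (s + r - u) =
      z k s r - z' k s r := fun r hr => by
    rw [← hp.sub_eq_integral_gapSource hs (le_add_of_nonneg_right hr), add_sub_cancel_left]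
  rw [hslope]
  exact ((hp.left.differentiable k s hs₀).hasDerivWithinAt.sub
    (hp.right.differentiable k s hs₀).hasDerivWithinAt).congr hgap (hgap 0 le_rfl)

theorem abs_integral_kernel_mul_slopeGap_sub_le (hp : IsForkedPair lam G K z₀ z z' a b)
    (ht : t ∈ Icc a b) (hx : t ≤ x) (hφ : IntervalIntegrable φ volume a t)
    (hE : ∀ s ∈ Icc a t, |∫ u in a..s, slopeGap z z' k b u| ≤ φ s) :
    |(∫ u in a..t, G (x - u) * slopeGap z z' k b u)
      - G (x - t) * ∫ u in a..t, slopeGap z z' k b u| ≤ K * ∫ u in a..t, φ u := by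
  refine abs_integral_mul_sub_mul_integral_le (g := fun u => G (x - u)) ht.1
    (LipschitzOnWith.of_dist_le_mul fun u hu v hv => ?_) (hp.intervalIntegrable_slopeGap ht) hφ hE
  have hlip := hp.data.lipschitz.dist_le_mul (x - u) (sub_nonneg.2 (hu.2.trans hx)) (x - v)
    (sub_nonneg.2 (hv.2.trans hx))
  rwa [dist_sub_left] at hlip

theorem abs_integral_rate_mul_hydroSource_sub_le (hp : IsForkedPair lam G K z₀ z z' a b)
    (ht : a ≤ t) (hφ : IntervalIntegrable (fun u => lam u * φ u) volume a t) {ρ : ℝ → ℝ}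
    (hρ : ∀ u ∈ Icc a t, 0 ≤ ρ u)
    (hΔ : ∀ u ∈ Icc a t, ∀ j, ∀ y ≥ 0, |z j u y - z' j u y| ≤ φ u) :
    |∫ u in a..t, lam u * (hydroSource G z ℓ u (ρ u) - hydroSource G z' ℓ u (ρ u))| ≤
      8 * ∫ u in a..t, lam u * φ u := by
  rw [← intervalIntegral.integral_const_mul, ← Real.norm_eq_abs]
  refine intervalIntegral.norm_integral_le_of_norm_le ht (.of_forall fun u hu => ?_)
    (hφ.const_mul 8)
  have hu' : u ∈ Icc a t := ⟨hu.1.le, hu.2⟩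
  have hu₀ := hp.nonneg.trans hu'.1
  have hlam := hp.data.rate_nonneg u hu₀
  rw [Real.norm_eq_abs, abs_mul, abs_of_nonneg hlam, mul_left_comm]
  exact mul_le_mul_of_nonneg_left (hp.left.abs_hydroSource_sub_hydroSource_le hp.data hp.right hu₀
    (hρ u hu') (hΔ u hu')) hlam

theorem sub_eq_integral_sub_integral (hp : IsForkedPair lam G K z₀ z z' a b) (ht : t ∈ Icc a b)
    (hx : t ≤ x) :
    z ℓ t (x - t) - z' ℓ t (x - t) =
      (∫ u in a..t, lam u * (hydroSource G z ℓ u (x - u) - hydroSource G z' ℓ u (x - u)))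
        - ∫ u in a..t, G (x - u) * slopeGap z z' (ℓ + 1) b u := by
  rw [hp.sub_eq_integral_gapSource ht hx]
  exact intervalIntegral.integral_sub (hp.intervalIntegrable_rate_mul_hydroSource_sub_hydroSource ℓ
    ht.1 (by fun_prop) fun u hu => sub_nonneg.2 (hu.2.trans hx))
    (hp.intervalIntegrable_kernel_mul_slopeGap ht hx)

theorem abs_sub_add_kernel_mul_integral_slopeGap_le (hp : IsForkedPair lam G K z₀ z z' a b)
    (ht : t ∈ Icc a b) (hr : 0 ≤ r) (hφ : IntervalIntegrable φ volume a t)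
    (hψ : IntervalIntegrable (fun u => lam u * ψ u) volume a t)
    (hE : ∀ s ∈ Icc a t, |∫ u in a..s, slopeGap z z' (ℓ + 1) b u| ≤ φ s)
    (hΔ : ∀ u ∈ Icc a t, ∀ j, ∀ y ≥ 0, |z j u y - z' j u y| ≤ ψ u) :
    |z ℓ t r - z' ℓ t r + G r * ∫ u in a..t, slopeGap z z' (ℓ + 1) b u| ≤
      K * (∫ u in a..t, φ u) + 8 * ∫ u in a..t, lam u * ψ u := by
  have hx : t ≤ t + r := le_add_of_nonneg_right hr
  have hslope := hp.abs_integral_kernel_mul_slopeGap_sub_le ht hx hφ hE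
  have hsource := hp.abs_integral_rate_mul_hydroSource_sub_le (ℓ := ℓ) (ρ := fun u => t + r - u)
    ht.1 hψ (fun u hu => sub_nonneg.2 (hu.2.trans hx)) hΔ
  have hgap := hp.sub_eq_integral_sub_integral (ℓ := ℓ) ht hx
  rw [add_sub_cancel_left] at hslope hgap
  rw [hgap, abs_le]
  rw [abs_le] at hslope hsource
  constructor <;> linarith

theorem abs_integral_slopeGap_le (hp : IsForkedPair lam G K z₀ z z' a b)
    (ht : t ∈ Icc a b) (hφ : IntervalIntegrable φ volume a t)
    (hψ : IntervalIntegrable (fun u => lam u * ψ u) volume a t)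
    (hE : ∀ s ∈ Icc a t, |∫ u in a..s, slopeGap z z' (k + 1) b u| ≤ φ s)
    (hΔ : ∀ u ∈ Icc a t, ∀ j, ∀ y ≥ 0, |z j u y - z' j u y| ≤ ψ u) :
    |∫ u in a..t, slopeGap z z' k b u| ≤
      K * (∫ u in a..t, φ u) + 16 * ∫ u in a..t, lam u * ψ u := by
  rcases hp.integral_slopeGap k with hzero | htransport
  · have hφ_nonneg : 0 ≤ ∫ u in a..t, φ u :=
      intervalIntegral.integral_nonneg ht.1 fun u hu => (abs_nonneg _).trans (hE u hu)
    have hψ_nonneg : 0 ≤ ∫ u in a..t, lam u * ψ u :=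
      intervalIntegral.integral_nonneg ht.1 fun u hu => mul_nonneg
        (hp.data.rate_nonneg u (hp.nonneg.trans hu.1))
        ((abs_nonneg _).trans (hΔ u hu 0 0 le_rfl))
    simp only [hzero, Pi.zero_apply, intervalIntegral.integral_zero, abs_zero]
    positivity
  have hsource_t := hp.abs_integral_rate_mul_hydroSource_sub_le (ℓ := k) (ρ := fun u => t - u)
    ht.1 hψ (fun u hu => sub_nonneg.2 hu.2) hΔ
  have hsource_zero := hp.abs_integral_rate_mul_hydroSource_sub_le (ℓ := k) (ρ := fun _ => 0)
    ht.1 hψ (fun _ _ => le_rfl) hΔ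
  have hslope := hp.abs_integral_kernel_mul_slopeGap_sub_le ht le_rfl hφ hE
  have hint_t := hp.intervalIntegrable_rate_mul_hydroSource_sub_hydroSource k ht.1
    (ρ := fun u => t - u) (by fun_prop) fun u hu => sub_nonneg.2 hu.2
  have hint_zero := hp.intervalIntegrable_rate_mul_hydroSource_sub_hydroSource k ht.1
    (ρ := fun _ => 0) measurable_const fun _ _ => le_rfl
  have hint_slope := hp.intervalIntegrable_kernel_mul_slopeGap (k := k + 1) ht le_rfl
  have hint_slope_zero := (hp.intervalIntegrable_slopeGap (k := k + 1) ht).const_mul (G 0)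
  rw [htransport t ht]
  simp only [gapSource]
  rw [intervalIntegral.integral_sub (hint_t.sub hint_slope) (hint_zero.sub hint_slope_zero),
    intervalIntegral.integral_sub hint_t hint_slope,
    intervalIntegral.integral_sub hint_zero hint_slope_zero, intervalIntegral.integral_const_mul]
  rw [sub_self] at hslope
  rw [abs_le] at hsource_t hsource_zero hslope ⊢
  constructor <;> linarith

theorem abs_sub_le_two (hp : IsForkedPair lam G K z₀ z z' a b) (ℓ : ℕ) (ht : 0 ≤ t)
    (hr : 0 ≤ r) : |z ℓ t r - z' ℓ t r| ≤ 2 := by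
  linarith [abs_sub (z ℓ t r) (z' ℓ t r), hp.left.abs_le_one ℓ t ht r hr,
    hp.right.abs_le_one ℓ t ht r hr]

theorem exists_abs_integral_slopeGap_succ_le (hp : IsForkedPair lam G K z₀ z z' a b) :
    ∃ M, ∀ ℓ, ∀ t ∈ Icc a b, |∫ u in a..t, slopeGap z z' (ℓ + 1) b u| ≤ M := by
  have hb : b ∈ Icc a b := ⟨hp.le, le_rfl⟩
  have hlam := (hp.data.intervalIntegrable_rate hp.nonneg hp.le).mul_const 2
  have hlam_nonneg : ∀ u ∈ Icc a b, 0 ≤ lam u * 2 := fun u hu =>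
    mul_nonneg (hp.data.rate_nonneg u (hp.nonneg.trans hu.1)) zero_le_two
  set C := 2 + 8 * ∫ u in a..b, lam u * 2
  have hC : 0 ≤ C := by
    have := intervalIntegral.integral_nonneg (μ := volume) hp.le hlam_nonneg
    positivity
  refine ⟨2 * C * Real.exp (2 * ∫ _ in a..b, (K : ℝ)), fun ℓ t ht => ?_⟩
  set E : ℝ → ℝ := fun t => ∫ u in a..t, slopeGap z z' (ℓ + 1) b u
  have hE_cont : ContinuousOn (fun t => |E t|) (Icc a b) :=
    (continuousOn_intervalIntegral (hp.intervalIntegrable_slopeGap hb)).abs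
  refine (forall_le_exp_of_forall_le_integral (ι := Unit) (f := fun _ t => |E t|)
    intervalIntegrable_const (fun _ _ => K.coe_nonneg) hC
    ((isCompact_Icc.bddAbove_image hE_cont).imp fun M hM _ t ht => hM (mem_image_of_mem _ ht))
    (fun φ hφ _ hEφ _ t ht => ?_) () ht).trans ?_
  · have hsub : Icc a t ⊆ Icc a b := Icc_subset_Icc_right ht.2
    have hbound := hp.abs_sub_add_kernel_mul_integral_slopeGap_le (ℓ := ℓ) (r := 0)
      (ψ := fun _ => 2) ht le_rfl
      ((hφ.mono hsub).intervalIntegrable_of_Icc ht.1)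
      (intervalIntegrable_of_mem_Icc hlam ⟨le_rfl, hp.le⟩ ht)
      (fun s hs => hEφ () s (hsub hs)) fun u hu j y hy =>
        hp.abs_sub_le_two j (hp.nonneg.trans hu.1) hy
    have hmono := monotoneOn_intervalIntegral hlam hlam_nonneg ht hb ht.2
    have hΔt := hp.abs_sub_le_two ℓ (hp.nonneg.trans ht.1) le_rfl
    rw [hp.data.zero, one_mul] at hbound
    rw [intervalIntegral.integral_const_mul]
    rw [abs_le] at hbound hΔt ⊢
    simp only [E, C] at hmono ⊢
    constructor <;> linarith
  · gcongr
    exact monotoneOn_intervalIntegral intervalIntegrable_const (fun _ _ => K.coe_nonneg) ht hb ht.2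

theorem max_abs_le_integral (hp : IsForkedPair lam G K z₀ z z' a b) (ht : t ∈ Icc a b)
    (hφ : ContinuousOn φ (Icc a t))
    (h : ∀ ℓ, ∀ s ∈ Icc a t, ∀ y ≥ 0,
      max |∫ u in a..s, slopeGap z z' (ℓ + 1) b u| |z ℓ s y - z' ℓ s y| ≤ φ s)
    (hr : 0 ≤ r) :
    max |∫ u in a..t, slopeGap z z' (ℓ + 1) b u| |z ℓ t r - z' ℓ t r| ≤
      ∫ u in a..t, (2 * K + 24 * lam u) * φ u := by
  have hφ_int : IntervalIntegrable φ volume a t := hφ.intervalIntegrable_of_Icc ht.1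
  have hlamφ : IntervalIntegrable (fun u => lam u * φ u) volume a t :=
    (hp.data.intervalIntegrable_rate hp.nonneg ht.1).mul_continuousOn (by rwa [uIcc_of_le ht.1])
  have hE ℓ : ∀ s ∈ Icc a t, |∫ u in a..s, slopeGap z z' (ℓ + 1) b u| ≤ φ s := fun s hs =>
    (le_max_left _ _).trans (h ℓ s hs 0 le_rfl)
  have hΔ : ∀ u ∈ Icc a t, ∀ j, ∀ y ≥ 0, |z j u y - z' j u y| ≤ φ u := fun u hu j y hy =>
    (le_max_right _ _).trans (h j u hu y hy)
  have hφ_nonneg : 0 ≤ ∫ u in a..t, φ u :=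
    intervalIntegral.integral_nonneg ht.1 fun u hu => (abs_nonneg _).trans (hE 0 u hu)
  have hlamφ_nonneg : 0 ≤ ∫ u in a..t, lam u * φ u :=
    intervalIntegral.integral_nonneg ht.1 fun u hu => mul_nonneg
      (hp.data.rate_nonneg u (hp.nonneg.trans hu.1)) ((abs_nonneg _).trans (hE 0 u hu))
  have hslope := hp.abs_integral_slopeGap_le ht hφ_int hlamφ (hE (ℓ + 1)) hΔ
  have hgap := hp.abs_sub_add_kernel_mul_integral_slopeGap_le ht hr hφ_int hlamφ (hE ℓ) hΔ
  have hkernel : |G r * ∫ u in a..t, slopeGap z z' (ℓ + 1) b u| ≤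
      |∫ u in a..t, slopeGap z z' (ℓ + 1) b u| := by
    rw [abs_mul, abs_of_pos (hp.data.pos r hr)]
    exact mul_le_of_le_one_left (abs_nonneg _) (hp.data.le_one r hr)
  have hsplit : ∫ u in a..t, (2 * K + 24 * lam u) * φ u =
      2 * K * (∫ u in a..t, φ u) + 24 * ∫ u in a..t, lam u * φ u := by
    simp only [add_mul, mul_assoc (24 : ℝ)]
    rw [intervalIntegral.integral_add (hφ_int.const_mul _) (hlamφ.const_mul _),
      intervalIntegral.integral_const_mul, intervalIntegral.integral_const_mul]
  have hKφ := mul_nonneg K.coe_nonneg hφ_nonneg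
  rw [hsplit]
  refine max_le (by linarith) ?_
  have htriangle := abs_sub (z ℓ t r - z' ℓ t r + G r * ∫ u in a..t, slopeGap z z' (ℓ + 1) b u)
    (G r * ∫ u in a..t, slopeGap z z' (ℓ + 1) b u)
  rw [add_sub_cancel_right] at htriangle
  linarith

theorem agreeUpTo_right (hp : IsForkedPair lam G K z₀ z z' a b) : AgreeUpTo z z' b := by
  intro ℓ t ht r hr
  rcases le_total t a with hta | hat
  · exact hp.agree ℓ t ⟨ht.1, hta⟩ hr
  obtain ⟨M, hM⟩ := hp.exists_abs_integral_slopeGap_succ_le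
  have hgronwall := forall_le_exp_of_forall_le_integral (C := 0)
    (k := fun u => 2 * K + 24 * lam u)
    (f := fun (p : ℕ × Ici (0 : ℝ)) s => max |∫ u in a..s, slopeGap z z' (p.1 + 1) b u|
      |z p.1 s p.2 - z' p.1 s p.2|)
    (intervalIntegrable_const.add
      ((hp.data.intervalIntegrable_rate hp.nonneg hp.le).const_mul _))
    (fun u hu => by linarith [hp.data.rate_nonneg u (hp.nonneg.trans hu.1), K.coe_nonneg]) le_rfl
    ⟨max M 2, fun p s hs =>
      max_le_max (hM p.1 s hs) (hp.abs_sub_le_two p.1 (hp.nonneg.trans hs.1) p.2.2)⟩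
    (fun φ hφ _ hφf p s hs => (hp.max_abs_le_integral hs
      (hφ.mono (Icc_subset_Icc_right hs.2)) (fun j u hu y hy =>
        hφf (j, ⟨y, hy⟩) u ⟨hu.1, hu.2.trans hs.2⟩) p.2.2).trans_eq (zero_add _).symm)
    (ℓ, ⟨r, hr⟩) ⟨hat, ht.2⟩
  rw [mul_zero, zero_mul] at hgronwall
  exact sub_eq_zero.1 (abs_nonpos_iff.1 ((le_max_right _ _).trans hgronwall))

end IsForkedPair

namespace AgreeUpTo

variable {lam G : ℝ → ℝ} {z₀ : ℕ → ℝ → ℝ} {z z' : ℕ → ℝ → ℝ → ℝ} {a : ℝ}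

theorem of_forall_Ico (hz : IsMildSolution lam G z₀ z) (hz' : IsMildSolution lam G z₀ z')
    (h : ∀ u ∈ Ico 0 a, AgreeUpTo z z' u) : AgreeUpTo z z' a := by
  intro ℓ t ht r hr
  rcases ht.2.lt_or_eq with hta | rfl
  · exact h t ⟨ht.1, hta⟩ ℓ t ⟨ht.1, le_rfl⟩ hr
  have hagree : ∀ u ∈ Ioo 0 t, AgreeUpTo z z' u ∧ u ∈ Icc 0 u := fun u hu =>
    ⟨h u (Ioo_subset_Ico_self hu), hu.1.le, le_rfl⟩
  have hslope : ∫ u in (0 : ℝ)..t, G (t + r - u) * boundarySlope z (ℓ + 1) u =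
      ∫ u in (0 : ℝ)..t, G (t + r - u) * boundarySlope z' (ℓ + 1) u :=
    intervalIntegral.integral_congr_Ioo_of_le ht.1 fun u hu => by
      simp only [(hagree u hu).1.boundarySlope_eq (hagree u hu).2]
  have hsource : ∫ u in (0 : ℝ)..t, lam u * hydroSource G z ℓ u (t + r - u) =
      ∫ u in (0 : ℝ)..t, lam u * hydroSource G z' ℓ u (t + r - u) :=
    intervalIntegral.integral_congr_Ioo_of_le ht.1 fun u hu => by
      simp only [(hagree u hu).1.hydroSource_eq (hagree u hu).2
        (sub_nonneg.2 (hu.2.le.trans (le_add_of_nonneg_right (mem_Ici.1 hr))))]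
  rw [hz.eq ℓ t ht.1 r hr, hz'.eq ℓ t ht.1 r hr, hslope, hsource]

theorem exists_gt {K : NNReal} (h : IsHydroData lam G K) (hz : IsMildSolution lam G z₀ z)
    (hz' : IsMildSolution lam G z₀ z') (ha : 0 ≤ a) (hagree : AgreeUpTo z z' a) :
    ∃ b > a, AgreeUpTo z z' b := by
  obtain ⟨b, hab, hb⟩ := hz.exists_forall_persists h ha
  obtain ⟨b', hab', hb'⟩ := hz'.exists_forall_persists h ha
  have hlt : a < min b b' := lt_min hab hab'
  have hpair : IsForkedPair lam G K z₀ z z' a (min b b') :=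
    { data := h
      left := hz
      right := hz'
      nonneg := ha
      le := hlt.le
      agree := hagree
      persists_left := fun k =>
        (hb k).mono ⟨le_rfl, hab.le⟩ ⟨hlt.le, min_le_left _ _⟩ ha
      persists_right := fun k =>
        (hb' k).mono ⟨le_rfl, hab'.le⟩ ⟨hlt.le, min_le_right _ _⟩ ha }
  exact ⟨_, hlt, hpair.agreeUpTo_right⟩

end AgreeUpTo

theorem hydroPDE_uniqueness_general {lam G : ℝ → ℝ} {K : NNReal} {z₀ : ℕ → ℝ → ℝ}
    {z z' : ℕ → ℝ → ℝ → ℝ} (h : IsHydroData lam G K) (hz : IsMildSolution lam G z₀ z)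
    (hz' : IsMildSolution lam G z₀ z') : ∀ ℓ, ∀ t ≥ 0, ∀ r ≥ 0, z ℓ t r = z' ℓ t r := by
  intro ℓ t ht r hr
  suffices hagree : AgreeUpTo z z' t from hagree ℓ t ⟨ht, le_rfl⟩ hr
  refine real_induction_Icc (fun a _ ha => .of_forall_Ico hz hz' ha) (fun a ha hagree => ?_)
    ⟨ht, le_rfl⟩
  obtain ⟨b, hab, hb⟩ := (hagree a ⟨ha.1, le_rfl⟩).exists_gt h hz hz' ha.1
  exact ⟨b, hab, fun u hu j s hs => hb j s ⟨hs.1, hs.2.trans hu.2⟩⟩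

theorem IsHydroSol.isMildSolution {lam G : ℝ → ℝ} {Z₀ : ℕ → ℝ → ℝ} {Z : ℕ → ℝ → ℝ → ℝ}
    (hZ : IsHydroSol lam G Z₀ Z) :
    IsMildSolution lam G (fun ℓ => Z₀ (ℓ + 1)) fun ℓ => Z (ℓ + 1) where
  lipschitz ℓ t ht := by
    obtain ⟨hdiff, ⟨M, hM⟩, -⟩ := hZ.regular (ℓ + 1) (by omega) t ht
    exact ⟨M.toNNReal, (convex_Ici 0).lipschitzOnWith_of_nnnorm_derivWithin_le
      (hdiff.differentiableOn one_ne_zero) fun r hr => NNReal.coe_le_coe.1 <|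
        (hM r hr).trans (Real.le_coe_toNNReal M)⟩
  differentiable ℓ t ht :=
    (hZ.regular (ℓ + 1) (by omega) t ht).1.differentiableOn one_ne_zero 0 self_mem_Ici
  abs_le_one ℓ t ht := (hZ.regular (ℓ + 1) (by omega) t ht).2.2
  measurable ℓ := hZ.meas (ℓ + 1) (by omega)
  eq ℓ t ht r hr := by
    cases ℓ with
    | zero => simpa only [hydroSource, boundarySlope, mul_assoc] using hZ.eq_one t ht r hr
    | succ ℓ =>
      simpa only [hydroSource, boundarySlope, mul_assoc, Nat.add_sub_cancel] using
        hZ.eq_ell (ℓ + 1 + 1) (by omega) t ht r hr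

/-- Uniqueness of solutions to the hydrodynamic PDE (Theorem 4.1). -/
theorem hydroPDE_uniqueness
    (lam g Gbar : ℝ → ℝ) (H : ℝ)
    (hlam_nonneg : ∀ t ≥ (0:ℝ), 0 ≤ lam t)
    (hlam_loc : ∀ T : ℝ, IntegrableOn lam (Icc 0 T))
    (hg_nonneg : ∀ x ≥ (0:ℝ), 0 ≤ g x)
    (hg_loc : ∀ T : ℝ, IntegrableOn g (Icc 0 T))
    (hg_int : IntegrableOn g (Ici 0))
    (hg_prob : ∫ x in Ici (0:ℝ), g x = 1)
    (hg_mean : ∫ x in Ici (0:ℝ), x * g x = 1)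
    (hGbar : ∀ x ≥ (0:ℝ), Gbar x = ∫ y in Ioi x, g y)
    (hhaz : ∀ x ≥ (0:ℝ), g x ≤ H * Gbar x)
    (Z0 : ℕ → ℝ → ℝ)
    (hZ0 : ∀ ℓ ≥ 1, ContDiffOn ℝ 1 (Z0 ℓ) (Ici 0) ∧
      (∃ M : ℝ, ∀ r ≥ (0:ℝ), |derivWithin (Z0 ℓ) (Ici 0) r| ≤ M) ∧
      ∀ r ≥ (0:ℝ), |Z0 ℓ r| ≤ 1)
    (Z Zt : ℕ → ℝ → ℝ → ℝ)
    (hZ : IsHydroSol lam Gbar Z0 Z) (hZt : IsHydroSol lam Gbar Z0 Zt) :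
    ∀ ℓ ≥ 1, ∀ t ≥ (0:ℝ), ∀ r ≥ (0:ℝ), Z ℓ t r = Zt ℓ t r := by
  have hdata := HasBoundedHazardRate.isHydroData
    ⟨hg_nonneg, hg_int, hg_prob, hGbar, hhaz⟩ hlam_nonneg hlam_loc
  intro ℓ hℓ
  obtain ⟨m, rfl⟩ := Nat.exists_eq_add_of_le' hℓ
  exact hydroPDE_uniqueness_general hdata hZ.isMildSolution hZt.isMildSolution m
end

section
/- Solution of the renewal equation via the renewal density: let g be a nonnegative locally integrable function on [0,∞), and let u be a nonnegative measurable function on [0,∞), bounded on every compact interval, satisfying u(t) = ∫₀ᵗ g(t−s) u(s) ds + g(t) for almost every t ≥ 0. Let F be a measurable function on [0,∞) that is bounded on every compact interval, and define D(t) = F(t) + ∫₀ᵗ u(t−s) F(s) ds. Then D satisfies the renewal equation D(t) = ∫₀ᵗ g(t−s) D(s) ds + F(t) for almost every t ≥ 0. -/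
open MeasureTheory Set

/-! One-sided convolution on `[0, ∞)` is two-sided convolution of the extensions by zero, and
causal locally integrable functions are closed under convolution, which is associative on them.
So `D = F + u ⋆ F` and `u = g ⋆ u + g` give
`g ⋆ D + F = g ⋆ F + (g ⋆ u) ⋆ F + F = (g + g ⋆ u) ⋆ F + F = u ⋆ F + F = D`. -/

open ContinuousLinearMap Function
open scoped Convolution

/-- Causal locally integrable functions on the line, standing for the locally integrable functions
on `[0, ∞)` extended by zero. They are closed under convolution. -/
structure CausalLocallyIntegrable {E : Type*} [NormedAddCommGroup E] (f : ℝ → E) : Prop where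
  support_subset : support f ⊆ Ici 0
  locallyIntegrable : LocallyIntegrable f

section HalfLine

variable {E E' V : Type*} [NormedAddCommGroup E] [NormedSpace ℝ E]
  [NormedAddCommGroup E'] [NormedSpace ℝ E'] [NormedAddCommGroup V] [NormedSpace ℝ V]

theorem convolution_integrand_indicator_Iic {f : ℝ → E} {g : ℝ → E'} (hf : support f ⊆ Ici 0)
    (hg : support g ⊆ Ici 0) (L : E →L[ℝ] E' →L[ℝ] V) {t T : ℝ} (ht : t ≤ T) (s : ℝ) :
    L ((Iic T).indicator f s) ((Iic T).indicator g (t - s)) = L (f s) (g (t - s)) := by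
  rcases lt_or_ge s 0 with hs | hs
  · have f_eq_zero : f s = 0 := notMem_support.1 fun h => hs.not_ge (hf h)
    simp [indicator, f_eq_zero]
  rcases lt_or_ge T s with hTs | hsT
  · have g_eq_zero : g (t - s) = 0 :=
      notMem_support.1 fun h => (sub_neg.2 (ht.trans_lt hTs)).not_ge (hg h)
    simp [indicator, g_eq_zero]
  rw [indicator_of_mem (mem_Iic.2 hsT), indicator_of_mem (mem_Iic.2 (by linarith))]

theorem convolution_indicator_Ioi (f : ℝ → E) (g : ℝ → E') (L : E →L[ℝ] E' →L[ℝ] V) :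
    (Ioi 0).indicator f ⋆[L] (Ioi 0).indicator g =
      (Ioi 0).indicator fun t => ∫ s in (0 : ℝ)..t, L (f (t - s)) (g s) := by
  rw [← posConvolution_eq_convolution_indicator f g L volume, posConvolution]
  congr! 2 with t
  have reflect := intervalIntegral.integral_comp_sub_left (a := 0) (b := t)
    (fun s => L (f s) (g (t - s))) t
  simpa using reflect.symm

theorem indicator_Ioi_ae_eq_convolution_add_iff (f : ℝ → E) (g : ℝ → E') (L : E →L[ℝ] E' →L[ℝ] V)
    (a b : ℝ → V) :
    (Ioi 0).indicator a =ᵐ[volume]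
        ((Ioi 0).indicator f ⋆[L] (Ioi 0).indicator g) + (Ioi 0).indicator b ↔
      ∀ᵐ t, 0 ≤ t → a t = (∫ s in (0 : ℝ)..t, L (f (t - s)) (g s)) + b t := by
  have ne_zero : ∀ᵐ t : ℝ, t ≠ 0 := Measure.ae_ne volume 0
  refine Filter.eventually_congr (ne_zero.mono fun t ht => ?_)
  rw [Pi.add_apply, convolution_indicator_Ioi]
  rcases ht.lt_or_gt with ht_neg | ht_pos
  · simp [ht_neg.not_gt, ht_neg.not_ge]
  · simp [ht_pos, ht_pos.le]

end HalfLine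

namespace CausalLocallyIntegrable

variable {E E' E'' V V' V'' : Type*}
  [NormedAddCommGroup E] [NormedAddCommGroup E'] [NormedAddCommGroup E'']
  [NormedAddCommGroup V] [NormedAddCommGroup V'] [NormedAddCommGroup V'']
  {f : ℝ → E} {g : ℝ → E'} {k : ℝ → E''}

theorem indicator_Ioi (hf : ∀ T : ℝ, IntegrableOn f (Icc 0 T)) :
    CausalLocallyIntegrable ((Ioi 0).indicator f) where
  support_subset := support_indicator_subset.trans Ioi_subset_Ici_self
  locallyIntegrable t := by
    refine ⟨Iic (t + 1), Iic_mem_nhds (lt_add_one t), ?_⟩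
    rw [IntegrableOn, integrable_indicator_iff measurableSet_Ioi, IntegrableOn,
      Measure.restrict_restrict measurableSet_Ioi, Ioi_inter_Iic]
    exact (hf (t + 1)).mono_set Ioc_subset_Icc_self

protected theorem norm (hf : CausalLocallyIntegrable f) : CausalLocallyIntegrable (‖f ·‖) where
  support_subset _ ht := hf.support_subset (norm_ne_zero_iff.1 ht)
  locallyIntegrable :=
    locallyIntegrableOn_univ.1 (locallyIntegrableOn_univ.2 hf.locallyIntegrable).norm

theorem integrable_indicator_Iic (hf : CausalLocallyIntegrable f) (T : ℝ) :
    Integrable ((Iic T).indicator f) := by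
  have integrableOn_Iic : IntegrableOn f (Iic T) :=
    (hf.locallyIntegrable.integrableOn_isCompact isCompact_Icc).of_forall_sdiff_eq_zero
      measurableSet_Iic fun _ hx => notMem_support.1 fun h => hx.2 ⟨hf.support_subset h, hx.1⟩
  exact integrableOn_Iic.integrable_indicator measurableSet_Iic

variable [NormedSpace ℝ E] [NormedSpace ℝ E'] [NormedSpace ℝ E'']
  [NormedSpace ℝ V] [NormedSpace ℝ V'] [NormedSpace ℝ V'']

theorem ae_convolutionExistsAt (hf : CausalLocallyIntegrable f) (hg : CausalLocallyIntegrable g)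
    (L : E →L[ℝ] E' →L[ℝ] V) : ∀ᵐ t, ConvolutionExistsAt f g t L := by
  have truncated : ∀ᵐ t, ∀ n : ℕ,
      ConvolutionExistsAt ((Iic (n : ℝ)).indicator f) ((Iic (n : ℝ)).indicator g) t L :=
    ae_all_iff.2 fun n =>
      (hf.integrable_indicator_Iic n).ae_convolution_exists L (hg.integrable_indicator_Iic n)
  filter_upwards [truncated] with t ht
  obtain ⟨n, hn⟩ := exists_nat_ge t
  simpa only [ConvolutionExistsAt,
    convolution_integrand_indicator_Iic hf.support_subset hg.support_subset L hn] using ht n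

protected theorem convolution (hf : CausalLocallyIntegrable f) (hg : CausalLocallyIntegrable g)
    (L : E →L[ℝ] E' →L[ℝ] V) : CausalLocallyIntegrable (f ⋆[L] g) where
  support_subset := by
    refine (support_convolution_subset L).trans ?_
    rintro _ ⟨s, hs, r, hr, rfl⟩
    exact mem_Ici.2 (add_nonneg (hf.support_subset hs) (hg.support_subset hr))
  locallyIntegrable t := by
    refine ⟨Iic (t + 1), Iic_mem_nhds (lt_add_one t), ?_⟩
    have truncated : Integrable ((Iic (t + 1)).indicator f ⋆[L] (Iic (t + 1)).indicator g) :=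
      (hf.integrable_indicator_Iic _).integrable_convolution L (hg.integrable_indicator_Iic _)
    refine truncated.integrableOn.congr_fun (fun r hr => ?_) measurableSet_Iic
    simp only [convolution_def,
      convolution_integrand_indicator_Iic hf.support_subset hg.support_subset L hr]

theorem convolution_assoc_ae [CompleteSpace V] [CompleteSpace V'] [CompleteSpace V'']
    (L : E →L[ℝ] E' →L[ℝ] V) (L₂ : V →L[ℝ] E'' →L[ℝ] V') (L₃ : E →L[ℝ] V'' →L[ℝ] V')
    (L₄ : E' →L[ℝ] E'' →L[ℝ] V'') (hL : ∀ x y z, L₂ (L x y) z = L₃ x (L₄ y z))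
    (hf : CausalLocallyIntegrable f) (hg : CausalLocallyIntegrable g)
    (hk : CausalLocallyIntegrable k) :
    (f ⋆[L] g) ⋆[L₂] k =ᵐ[volume] f ⋆[L₃] (g ⋆[L₄] k) := by
  filter_upwards [hf.norm.ae_convolutionExistsAt (hg.norm.convolution hk.norm (mul ℝ ℝ)) (mul ℝ ℝ)]
    with t exists_norm
  exact convolution_assoc L L₂ L₃ L₄ hL hf.locallyIntegrable.aestronglyMeasurable
    hg.locallyIntegrable.aestronglyMeasurable hk.locallyIntegrable.aestronglyMeasurable
    (hf.ae_convolutionExistsAt hg L) (hg.norm.ae_convolutionExistsAt hk.norm (mul ℝ ℝ)) exists_norm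

end CausalLocallyIntegrable

section Renewal

variable {A E : Type*} [NormedRing A] [NormedAlgebra ℝ A] [CompleteSpace A]
  [NormedAddCommGroup E] [NormedSpace ℝ E] [CompleteSpace E] [Module A E] [IsBoundedSMul A E]
  [IsScalarTower ℝ A E] {g u : ℝ → A} {F D : ℝ → E}

theorem CausalLocallyIntegrable.ae_eq_convolution_add_of_renewal_density
    (hg : CausalLocallyIntegrable g) (hu : CausalLocallyIntegrable u)
    (hF : CausalLocallyIntegrable F) (hu_eq : u =ᵐ[volume] (g ⋆[mul ℝ A] u) + g)
    (hD : D =ᵐ[volume] (u ⋆[lsmul ℝ A] F) + F) :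
    D =ᵐ[volume] (g ⋆[lsmul ℝ A] D) + F := by
  filter_upwards [hD, hg.ae_convolutionExistsAt hF (lsmul ℝ A),
    hg.ae_convolutionExistsAt (hu.convolution hF (lsmul ℝ A)) (lsmul ℝ A),
    (hg.convolution hu (mul ℝ A)).ae_convolutionExistsAt hF (lsmul ℝ A),
    hg.convolution_assoc_ae (mul ℝ A) (lsmul ℝ A) (lsmul ℝ A) (lsmul ℝ A) mul_smul hu hF]
    with t hDt exists_gF exists_g_uF exists_gu_F assoc
  have convolution_eq : (u ⋆[lsmul ℝ A] F) t = (g ⋆[lsmul ℝ A] D) t := calc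
    (u ⋆[lsmul ℝ A] F) t = (((g ⋆[mul ℝ A] u) + g) ⋆[lsmul ℝ A] F) t := by
      rw [convolution_congr _ hu_eq .rfl]
    _ = ((g ⋆[mul ℝ A] u) ⋆[lsmul ℝ A] F) t + (g ⋆[lsmul ℝ A] F) t :=
      exists_gu_F.add_distrib exists_gF
    _ = (g ⋆[lsmul ℝ A] (u ⋆[lsmul ℝ A] F)) t + (g ⋆[lsmul ℝ A] F) t := by rw [assoc]
    _ = (g ⋆[lsmul ℝ A] ((u ⋆[lsmul ℝ A] F) + F)) t := (exists_g_uF.distrib_add exists_gF).symm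
    _ = (g ⋆[lsmul ℝ A] D) t := by rw [convolution_congr _ .rfl hD]
  rw [hDt, Pi.add_apply, Pi.add_apply, convolution_eq]

theorem renewal_density_solves_renewal_equation_general
    (hg : ∀ T : ℝ, IntegrableOn g (Icc 0 T)) (hu : ∀ T : ℝ, IntegrableOn u (Icc 0 T))
    (hF : ∀ T : ℝ, IntegrableOn F (Icc 0 T))
    (hu_eq : ∀ᵐ t, 0 ≤ t → u t = (∫ s in (0 : ℝ)..t, g (t - s) * u s) + g t)
    (hD : ∀ᵐ t, 0 ≤ t → D t = F t + ∫ s in (0 : ℝ)..t, u (t - s) • F s) :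
    ∀ᵐ t, 0 ≤ t → D t = (∫ s in (0 : ℝ)..t, g (t - s) • D s) + F t := by
  simp only [add_comm (F _)] at hD
  refine (indicator_Ioi_ae_eq_convolution_add_iff g D (lsmul ℝ A) D F).1 ?_
  exact (CausalLocallyIntegrable.indicator_Ioi hg).ae_eq_convolution_add_of_renewal_density
    (.indicator_Ioi hu) (.indicator_Ioi hF)
    ((indicator_Ioi_ae_eq_convolution_add_iff g u (mul ℝ A) u g).2 hu_eq)
    ((indicator_Ioi_ae_eq_convolution_add_iff u F (lsmul ℝ A) D F).2 hD)

end Renewal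

theorem integrableOn_of_exists_norm_le {α E : Type*} [MeasurableSpace α] {μ : Measure α}
    [NormedAddCommGroup E] {f : α → E} {s : Set α} (hs : MeasurableSet s) (hμs : μ s ≠ ⊤)
    (hf : AEStronglyMeasurable f μ) (hf_bdd : ∃ M : ℝ, ∀ x ∈ s, ‖f x‖ ≤ M) :
    IntegrableOn f s μ := by
  obtain ⟨M, hM⟩ := hf_bdd
  exact Measure.integrableOn_of_bounded hμs hf ((ae_restrict_mem hs).mono hM)

/-- Solution of the renewal equation via the renewal density: if `u = g ∗ u + g` a.e. on
`[0,∞)` and `D = F + u ∗ F`, then `D = g ∗ D + F` a.e. on `[0,∞)`. -/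
theorem renewal_density_solves_renewal_equation
    (g u F D : ℝ → ℝ)
    (hg_nonneg : ∀ x ≥ (0:ℝ), 0 ≤ g x)
    (hg_loc : ∀ T : ℝ, IntegrableOn g (Icc 0 T))
    (hu_meas : Measurable u)
    (hu_nonneg : ∀ x ≥ (0:ℝ), 0 ≤ u x)
    (hu_bdd : ∀ T : ℝ, ∃ M : ℝ, ∀ x ∈ Icc (0:ℝ) T, u x ≤ M)
    (hu_eq : ∀ᵐ t ∂(volume : Measure ℝ),
      0 ≤ t → u t = (∫ s in (0:ℝ)..t, g (t - s) * u s) + g t)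
    (hF_meas : Measurable F)
    (hF_bdd : ∀ T : ℝ, ∃ M : ℝ, ∀ x ∈ Icc (0:ℝ) T, |F x| ≤ M)
    (hD : ∀ t : ℝ, D t = F t + ∫ s in (0:ℝ)..t, u (t - s) * F s) :
    ∀ᵐ t ∂(volume : Measure ℝ),
      0 ≤ t → D t = (∫ s in (0:ℝ)..t, g (t - s) * D s) + F t := by
  have hu_norm_bdd (T : ℝ) : ∃ M : ℝ, ∀ x ∈ Icc (0:ℝ) T, ‖u x‖ ≤ M :=
    (hu_bdd T).imp fun M hM x hx => (Real.norm_of_nonneg (hu_nonneg x hx.1)).trans_le (hM x hx)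
  have hu_loc (T : ℝ) : IntegrableOn u (Icc 0 T) := integrableOn_of_exists_norm_le
    measurableSet_Icc measure_Icc_lt_top.ne hu_meas.aestronglyMeasurable (hu_norm_bdd T)
  have hF_loc (T : ℝ) : IntegrableOn F (Icc 0 T) := integrableOn_of_exists_norm_le
    measurableSet_Icc measure_Icc_lt_top.ne hF_meas.aestronglyMeasurable (hF_bdd T)
  exact renewal_density_solves_renewal_equation_general hg_loc hu_loc hF_loc hu_eq
    (.of_forall fun t _ => hD t)
end

section
/- Uniqueness of locally bounded solutions of the renewal equation: let g be a nonnegative locally integrable function on [0,∞) with ∫₀^∞ g(x)dx ≤ 1, and let F be a measurable function on [0,∞) bounded on every compact interval. If D₁ and D₂ are measurable functions on [0,∞), each bounded on every compact interval, and each satisfies D(t) = ∫₀ᵗ g(t−s) D(s) ds + F(t) for all t ≥ 0, then D₁(t) = D₂(t) for all t ≥ 0. -/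
open MeasureTheory Set

/-!
A bounded function `u` with `u t = ∫ s in 0..t, K (t - s) (u s)` on `[0, T]` vanishes there: in the
weighted norm `⨆ t ∈ [0, T], exp (-c t) ‖u t‖`, the convolution with `K` is Lipschitz with constant
`∫ x in 0..T, exp (-c x) ‖K x‖`, which is less than `1` once `c` is large. Two bounded solutions of
the renewal equation differ by such a `u`.
-/

open Filter Topology

theorem zero_mem_upperBounds_of_mul_mem {A : Set ℝ} {q : ℝ} (hq : q < 1) (hA : BddAbove A)
    (hmul : ∀ M ∈ upperBounds A, q * M ∈ upperBounds A) : 0 ∈ upperBounds A := by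
  intro a ha
  have hle : sSup A ≤ q * sSup A :=
    csSup_le ⟨a, ha⟩ (hmul _ fun _ hb => le_csSup hA hb)
  have hnonpos : sSup A ≤ 0 := by nlinarith
  exact (le_csSup hA ha).trans hnonpos

theorem tendsto_integral_exp_neg_mul_smul_atTop {α E : Type*} [MeasurableSpace α] {μ : Measure α}
    [NormedAddCommGroup E] [NormedSpace ℝ E] {φ : α → ℝ} {f : α → E}
    (hφ : AEMeasurable φ μ) (hφ_pos : ∀ᵐ x ∂μ, 0 < φ x) (hf : Integrable f μ) :
    Tendsto (fun c : ℝ => ∫ x, Real.exp (-(c * φ x)) • f x ∂μ) atTop (𝓝 0) := by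
  rw [← integral_zero α E (μ := μ)]
  refine tendsto_integral_filter_of_dominated_convergence (fun x => ‖f x‖) ?_ ?_ hf.norm ?_
  · exact .of_forall fun c =>
      (hφ.const_mul c).neg.exp.aestronglyMeasurable.smul hf.aestronglyMeasurable
  · filter_upwards [eventually_ge_atTop 0] with c hc
    filter_upwards [hφ_pos] with x hx
    rw [norm_smul, Real.norm_of_nonneg (Real.exp_nonneg _)]
    have hexp : Real.exp (-(c * φ x)) ≤ 1 :=
      Real.exp_le_one_iff.2 (neg_nonpos.2 (mul_nonneg hc hx.le))
    exact mul_le_of_le_one_left (norm_nonneg _) hexp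
  · filter_upwards [hφ_pos] with x hx
    have hexp : Tendsto (fun c : ℝ => Real.exp (-(c * φ x))) atTop (𝓝 0) :=
      Real.tendsto_exp_neg_atTop_nhds_zero.comp (tendsto_id.atTop_mul_const hx)
    simpa only [zero_smul] using hexp.smul_const (f x)

section Interval

variable {E : Type*} [NormedAddCommGroup E] {f : ℝ → E} {c t : ℝ}

theorem intervalIntegrable_comp_sub_left_zero (hf : IntervalIntegrable f volume 0 t) :
    IntervalIntegrable (fun s => f (t - s)) volume 0 t := by
  simpa only [sub_zero, sub_self] using (hf.comp_sub_left t).symm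

theorem intervalIntegrable_exp_neg_mul_norm (hf : IntervalIntegrable f volume 0 t) :
    IntervalIntegrable (fun x => Real.exp (-(c * x)) * ‖f x‖) volume 0 t :=
  hf.norm.continuousOn_mul (by fun_prop)

theorem exists_nonneg_integral_exp_neg_mul_norm_lt {ε : ℝ} (hε : 0 < ε) (ht : 0 ≤ t)
    (hf : IntervalIntegrable f volume 0 t) :
    ∃ c ≥ 0, ∫ x in 0..t, Real.exp (-(c * x)) * ‖f x‖ < ε := by
  have hpos : ∀ᵐ x ∂volume.restrict (Ioc 0 t), 0 < x :=
    ae_restrict_of_forall_mem measurableSet_Ioc fun x hx => hx.1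
  have hlim := tendsto_integral_exp_neg_mul_smul_atTop aemeasurable_id' hpos hf.1.norm
  obtain ⟨c, hlt, hc⟩ := ((hlim.eventually_lt_const hε).and (eventually_ge_atTop 0)).exists
  exact ⟨c, hc, by simpa only [intervalIntegral.integral_of_le ht, smul_eq_mul] using hlt⟩

end Interval

section Convolution

variable {E F : Type*} [NormedAddCommGroup E] [NormedSpace ℝ E] [NormedAddCommGroup F]
  [NormedSpace ℝ F] {t T : ℝ}

theorem intervalIntegrable_convolution_apply {K : ℝ → E →L[ℝ] F} {u : ℝ → E} {M : ℝ} (ht : 0 ≤ t)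
    (hK : IntervalIntegrable K volume 0 t)
    (hu_meas : AEStronglyMeasurable u (volume.restrict (Icc 0 t)))
    (hu_bdd : ∀ s ∈ Icc 0 t, ‖u s‖ ≤ M) :
    IntervalIntegrable (fun s => K (t - s) (u s)) volume 0 t := by
  have hK' := intervalIntegrable_comp_sub_left_zero hK
  rw [intervalIntegrable_iff_integrableOn_Icc_of_le ht] at hK' ⊢
  exact (ContinuousLinearMap.id ℝ (E →L[ℝ] F)).integrable_of_bilin_of_bdd_right M hK' hu_meas
    (ae_restrict_of_forall_mem measurableSet_Icc hu_bdd)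

theorem exp_neg_mul_norm_convolution_le {K : ℝ → E →L[ℝ] F} {u : ℝ → E} {c M : ℝ} (ht : 0 ≤ t)
    (hK : IntervalIntegrable K volume 0 t)
    (hu : ∀ s ∈ Icc 0 t, Real.exp (-(c * s)) * ‖u s‖ ≤ M) :
    Real.exp (-(c * t)) * ‖∫ s in 0..t, K (t - s) (u s)‖ ≤
      (∫ x in 0..t, Real.exp (-(c * x)) * ‖K x‖) * M := by
  have hpointwise : ∀ s ∈ Ioc 0 t, ‖Real.exp (-(c * t)) • K (t - s) (u s)‖ ≤
      Real.exp (-(c * (t - s))) * ‖K (t - s)‖ * M := fun s hs => calc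
    ‖Real.exp (-(c * t)) • K (t - s) (u s)‖
      ≤ Real.exp (-(c * t)) * (‖K (t - s)‖ * ‖u s‖) := by
        rw [norm_smul, Real.norm_of_nonneg (Real.exp_nonneg _)]
        gcongr
        exact (K (t - s)).le_opNorm (u s)
    _ = Real.exp (-(c * (t - s))) * ‖K (t - s)‖ * (Real.exp (-(c * s)) * ‖u s‖) := by
        rw [show -(c * t) = -(c * (t - s)) + -(c * s) by ring, Real.exp_add]
        ring
    _ ≤ Real.exp (-(c * (t - s))) * ‖K (t - s)‖ * M := by
        gcongr
        exact hu s (Ioc_subset_Icc_self hs)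
  calc Real.exp (-(c * t)) * ‖∫ s in 0..t, K (t - s) (u s)‖
      = ‖∫ s in 0..t, Real.exp (-(c * t)) • K (t - s) (u s)‖ := by
        rw [intervalIntegral.integral_smul, norm_smul, Real.norm_of_nonneg (Real.exp_nonneg _)]
    _ ≤ ∫ s in 0..t, Real.exp (-(c * (t - s))) * ‖K (t - s)‖ * M :=
        intervalIntegral.norm_integral_le_of_norm_le ht (.of_forall hpointwise)
          ((intervalIntegrable_comp_sub_left_zero
            (intervalIntegrable_exp_neg_mul_norm hK)).mul_const M)
    _ = (∫ x in 0..t, Real.exp (-(c * x)) * ‖K x‖) * M := by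
        rw [intervalIntegral.integral_mul_const,
          intervalIntegral.integral_comp_sub_left (fun x => Real.exp (-(c * x)) * ‖K x‖),
          sub_self, sub_zero]

theorem eqOn_zero_of_eq_integral_convolution {K : ℝ → E →L[ℝ] E} {u : ℝ → E} {M : ℝ}
    (hK : IntervalIntegrable K volume 0 T) (hu_bdd : ∀ t ∈ Icc 0 T, ‖u t‖ ≤ M)
    (hu : ∀ t ∈ Icc 0 T, u t = ∫ s in 0..t, K (t - s) (u s)) : EqOn u 0 (Icc 0 T) := by
  intro t₀ ht₀
  obtain ⟨c, hc, hlt⟩ :=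
    exists_nonneg_integral_exp_neg_mul_norm_lt one_pos (ht₀.1.trans ht₀.2) hK
  set w : ℝ → ℝ := fun t => Real.exp (-(c * t)) * ‖u t‖
  have hw_bdd : BddAbove (w '' Icc 0 T) := by
    refine ⟨M, forall_mem_image.2 fun t ht => ?_⟩
    have hexp : Real.exp (-(c * t)) ≤ 1 :=
      Real.exp_le_one_iff.2 (neg_nonpos.2 (mul_nonneg hc ht.1))
    exact (mul_le_of_le_one_left (norm_nonneg _) hexp).trans (hu_bdd t ht)
  have hcontract : ∀ B ∈ upperBounds (w '' Icc 0 T),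
      (∫ x in 0..T, Real.exp (-(c * x)) * ‖K x‖) * B ∈ upperBounds (w '' Icc 0 T) := by
    refine fun B hB => forall_mem_image.2 fun t ht => ?_
    have hB_nonneg : 0 ≤ B :=
      (mul_nonneg (Real.exp_nonneg _) (norm_nonneg _)).trans (hB (mem_image_of_mem w ht))
    have hK_t : IntervalIntegrable K volume 0 t :=
      hK.mono_set (uIcc_subset_uIcc_left (Icc_subset_uIcc ht))
    calc w t = Real.exp (-(c * t)) * ‖∫ s in 0..t, K (t - s) (u s)‖ := by simp only [w, ← hu t ht]
      _ ≤ (∫ x in 0..t, Real.exp (-(c * x)) * ‖K x‖) * B :=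
        exp_neg_mul_norm_convolution_le ht.1 hK_t fun s hs =>
          hB (mem_image_of_mem w (Icc_subset_Icc_right ht.2 hs))
      _ ≤ (∫ x in 0..T, Real.exp (-(c * x)) * ‖K x‖) * B := by
        gcongr
        exact intervalIntegral.integral_mono_interval le_rfl ht.1 ht.2
          (.of_forall fun x => by positivity) (intervalIntegrable_exp_neg_mul_norm hK)
  have hw_nonpos : w t₀ ≤ 0 :=
    zero_mem_upperBounds_of_mul_mem hlt hw_bdd hcontract (mem_image_of_mem w ht₀)
  exact norm_le_zero_iff.1 (nonpos_of_mul_nonpos_right hw_nonpos (Real.exp_pos _))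

end Convolution

theorem renewal_equation_uniqueness_general {E : Type*} [NormedAddCommGroup E] [NormedSpace ℝ E]
    [CompleteSpace E] {K : ℝ → E →L[ℝ] E} {F D₁ D₂ : ℝ → E} {T M₁ M₂ : ℝ}
    (hK : IntegrableOn K (Icc 0 T))
    (hD₁_meas : AEStronglyMeasurable D₁ (volume.restrict (Icc 0 T)))
    (hD₁_bdd : ∀ t ∈ Icc 0 T, ‖D₁ t‖ ≤ M₁)
    (hD₂_meas : AEStronglyMeasurable D₂ (volume.restrict (Icc 0 T)))
    (hD₂_bdd : ∀ t ∈ Icc 0 T, ‖D₂ t‖ ≤ M₂)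
    (hD₁_eq : ∀ t ∈ Icc 0 T, D₁ t = (∫ s in 0..t, K (t - s) (D₁ s)) + F t)
    (hD₂_eq : ∀ t ∈ Icc 0 T, D₂ t = (∫ s in 0..t, K (t - s) (D₂ s)) + F t) :
    EqOn D₁ D₂ (Icc 0 T) := by
  intro t₀ ht₀
  have hK' : IntervalIntegrable K volume 0 T :=
    (intervalIntegrable_iff_integrableOn_Icc_of_le (ht₀.1.trans ht₀.2)).2 hK
  have hconv {D : ℝ → E} {M : ℝ} (hD : AEStronglyMeasurable D (volume.restrict (Icc 0 T)))
      (hM : ∀ t ∈ Icc 0 T, ‖D t‖ ≤ M) {t : ℝ} (ht : t ∈ Icc 0 T) :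
      IntervalIntegrable (fun s => K (t - s) (D s)) volume 0 t :=
    intervalIntegrable_convolution_apply ht.1
      (hK'.mono_set (uIcc_subset_uIcc_left (Icc_subset_uIcc ht)))
      (hD.mono_set (Icc_subset_Icc_right ht.2)) fun s hs => hM s (Icc_subset_Icc_right ht.2 hs)
  have hsub_bdd : ∀ t ∈ Icc 0 T, ‖(D₁ - D₂) t‖ ≤ M₁ + M₂ := fun t ht =>
    norm_sub_le_of_le (hD₁_bdd t ht) (hD₂_bdd t ht)
  have hsub_eq : ∀ t ∈ Icc 0 T, (D₁ - D₂) t = ∫ s in 0..t, K (t - s) ((D₁ - D₂) s) := by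
    intro t ht
    simp only [Pi.sub_apply, map_sub]
    rw [intervalIntegral.integral_sub (hconv hD₁_meas hD₁_bdd ht) (hconv hD₂_meas hD₂_bdd ht),
      hD₁_eq t ht, hD₂_eq t ht, add_sub_add_right_eq_sub]
  exact sub_eq_zero.1 (eqOn_zero_of_eq_integral_convolution hK' hsub_bdd hsub_eq ht₀)

/-- Uniqueness of locally bounded solutions of the renewal equation `D = g ∗ D + F`
when `g` is a (sub-)probability density on `[0,∞)`. -/
theorem renewal_equation_uniqueness
    (g F D1 D2 : ℝ → ℝ)
    (hg_nonneg : ∀ x ≥ (0:ℝ), 0 ≤ g x)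
    (hg_loc : ∀ T : ℝ, IntegrableOn g (Icc 0 T))
    (hg_int : IntegrableOn g (Ici 0))
    (hg_mass : ∫ x in Ici (0:ℝ), g x ≤ 1)
    (hF_meas : Measurable F)
    (hF_bdd : ∀ T : ℝ, ∃ M : ℝ, ∀ x ∈ Icc (0:ℝ) T, |F x| ≤ M)
    (hD1_meas : Measurable D1)
    (hD1_bdd : ∀ T : ℝ, ∃ M : ℝ, ∀ x ∈ Icc (0:ℝ) T, |D1 x| ≤ M)
    (hD2_meas : Measurable D2)
    (hD2_bdd : ∀ T : ℝ, ∃ M : ℝ, ∀ x ∈ Icc (0:ℝ) T, |D2 x| ≤ M)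
    (hD1_eq : ∀ t ≥ (0:ℝ), D1 t = (∫ s in (0:ℝ)..t, g (t - s) * D1 s) + F t)
    (hD2_eq : ∀ t ≥ (0:ℝ), D2 t = (∫ s in (0:ℝ)..t, g (t - s) * D2 s) + F t) :
    ∀ t ≥ (0:ℝ), D1 t = D2 t := by
  intro t ht
  obtain ⟨M₁, hM₁⟩ := hD1_bdd t
  obtain ⟨M₂, hM₂⟩ := hD2_bdd t
  exact renewal_equation_uniqueness_general
    ((ContinuousLinearMap.mul ℝ ℝ).integrable_comp (hg_loc t))
    hD1_meas.aestronglyMeasurable hM₁ hD2_meas.aestronglyMeasurable hM₂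
    (fun r hr => hD1_eq r hr.1) (fun r hr => hD2_eq r hr.1) ⟨ht, le_rfl⟩
end

section
/- Gronwall-type lemma for a countable coupled system: let λ be a nonnegative locally integrable function on [0,∞), let K ≥ 0, and let V_ℓ: [0,∞) → [0,2] (ℓ ≥ 1) be measurable functions such that for all t ≥ 0: V₁(t) ≤ K ∫₀ᵗ (1+λ(s))(V₁(s) + V₂(s)) ds, and for every ℓ ≥ 2, V_ℓ(t) ≤ K ∫₀ᵗ (1+λ(s))(V_{ℓ−1}(s) + V_ℓ(s) + V_{ℓ+1}(s)) ds. Then V_ℓ(t) = 0 for every ℓ ≥ 1 and every t ≥ 0. -/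
open MeasureTheory Set

/-!
Picard iteration. Let `Λ t = ∫ s in a..t, k s`, where `k` dominates the absolute row sums of the
coefficients. Inserting the bound `V j ≤ C * Λ ^ n / n!` for all `j` into the system gives
`V i t ≤ (C / n!) * ∫ s in a..t, k s * Λ s ^ n = C * Λ t ^ (n + 1) / (n + 1)!`, the integral being
computed by the fundamental theorem of calculus for the absolutely continuous function
`Λ ^ (n + 1)`. These bounds tend to zero as `n → ∞`, for every fixed `t`.
-/

open Filter Topology
open scoped Nat

section AbsolutelyContinuous

variable {f k : ℝ → ℝ} {a b : ℝ}

lemma absolutelyContinuousOnInterval_pow (hf : AbsolutelyContinuousOnInterval f a b) (n : ℕ) :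
    AbsolutelyContinuousOnInterval (fun x ↦ f x ^ n) a b := by
  induction n with
  | zero =>
    simpa only [pow_zero] using (contDiffOn_const (c := (1 : ℝ))).absolutelyContinuousOnInterval
  | succ n ih => simpa only [pow_succ] using ih.fun_mul hf

lemma integral_mul_primitive_pow (hk : IntervalIntegrable k volume a b) (n : ℕ) :
    ∫ s in a..b, k s * (∫ r in a..s, k r) ^ n = (∫ r in a..b, k r) ^ (n + 1) / (n + 1) := by
  have hderiv : ∀ᵐ s, s ∈ uIoc a b →
      deriv (fun x ↦ (∫ r in a..x, k r) ^ (n + 1)) s =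
        (n + 1) * (k s * (∫ r in a..s, k r) ^ n) := by
    filter_upwards [hk.ae_hasDerivAt_integral] with s hs hsab
    have hpow := (hs (uIoc_subset_uIcc hsab) a left_mem_uIcc).fun_pow (n + 1)
    rw [hpow.deriv]
    push_cast [Nat.add_sub_cancel]
    ring
  have hftc := (absolutelyContinuousOnInterval_pow
    (hk.absolutelyContinuousOnInterval_intervalIntegral left_mem_uIcc)
    (n + 1)).integral_deriv_eq_sub
  rw [intervalIntegral.integral_congr_ae hderiv, intervalIntegral.integral_const_mul,
    intervalIntegral.integral_same, zero_pow n.succ_ne_zero, sub_zero] at hftc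
  rw [eq_div_iff n.cast_add_one_ne_zero, mul_comm, hftc]

end AbsolutelyContinuous

lemma abs_sum_mul_le {ι R : Type*} [Ring R] [LinearOrder R] [IsStrictOrderedRing R]
    {s : Finset ι} {w v : ι → R} {W M : R}
    (hw : ∑ i ∈ s, |w i| ≤ W) (hM : 0 ≤ M) (hv : ∀ i ∈ s, |v i| ≤ M) :
    |∑ i ∈ s, w i * v i| ≤ W * M :=
  calc |∑ i ∈ s, w i * v i| ≤ ∑ i ∈ s, |w i| * |v i| := by
        simpa only [abs_mul] using s.abs_sum_le_sum_abs fun i ↦ w i * v i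
    _ ≤ ∑ i ∈ s, |w i| * M := by gcongr with i hi; exact hv i hi
    _ = (∑ i ∈ s, |w i|) * M := (s.sum_mul _ M).symm
    _ ≤ W * M := by gcongr

lemma integrable_sum_mul {ι α : Type*} [MeasurableSpace α] {μ : Measure α} {s : Finset ι}
    {w v : ι → α → ℝ} {W : α → ℝ} {M : ℝ} (hW : Integrable W μ) (hM : 0 ≤ M)
    (hw_meas : ∀ i ∈ s, AEStronglyMeasurable (w i) μ)
    (hv_meas : ∀ i ∈ s, AEStronglyMeasurable (v i) μ)
    (hw : ∀ᵐ x ∂μ, ∑ i ∈ s, |w i x| ≤ W x) (hv : ∀ᵐ x ∂μ, ∀ i ∈ s, |v i x| ≤ M) :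
    Integrable (fun x ↦ ∑ i ∈ s, w i x * v i x) μ := by
  refine (hW.mul_const M).mono'
    (s.aestronglyMeasurable_fun_sum fun i hi ↦ (hw_meas i hi).mul (hv_meas i hi)) ?_
  filter_upwards [hw, hv] with x hwx hvx
  exact abs_sum_mul_le hwx hM hvx

section LinearSystem

variable {ι : Type*} {N : ι → Finset ι} {A : ι → ι → ℝ → ℝ} {V : ι → ℝ → ℝ} {k : ℝ → ℝ}
  {a b C : ℝ}

lemma le_mul_primitive_pow_div_factorial
    (hk : IntegrableOn k (Icc a b)) (hAk : ∀ i, ∀ s ∈ Icc a b, ∑ j ∈ N i, |A i j s| ≤ k s)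
    (hV : ∀ i, ∀ t ∈ Icc a b, V i t ∈ Icc 0 C)
    (hAV : ∀ i, IntegrableOn (fun s ↦ ∑ j ∈ N i, A i j s * V j s) (Icc a b))
    (h : ∀ i, ∀ t ∈ Icc a b, V i t ≤ ∫ s in a..t, ∑ j ∈ N i, A i j s * V j s) (n : ℕ) :
    ∀ i, ∀ t ∈ Icc a b, V i t ≤ C * (∫ s in a..t, k s) ^ n / n ! := by
  induction n with
  | zero => simpa using fun i t hat htb ↦ (hV i t ⟨hat, htb⟩).2
  | succ n ih =>
    intro i t ht
    have hsub : Icc a t ⊆ Icc a b := Icc_subset_Icc_right ht.2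
    have hkt : IntervalIntegrable k volume a t :=
      (intervalIntegrable_iff_integrableOn_Icc_of_le ht.1).2 (hk.mono_set hsub)
    have hprim : ContinuousOn (fun s ↦ C * (∫ r in a..s, k r) ^ n / n !) (uIcc a t) :=
      (((intervalIntegral.continuousOn_primitive_interval' hkt left_mem_uIcc).pow n).const_mul
        C).div_const _
    calc V i t ≤ ∫ s in a..t, ∑ j ∈ N i, A i j s * V j s := h i t ht
      _ ≤ ∫ s in a..t, k s * (C * (∫ r in a..s, k r) ^ n / n !) := by
        refine intervalIntegral.integral_mono_on ht.1
          ((intervalIntegrable_iff_integrableOn_Icc_of_le ht.1).2 ((hAV i).mono_set hsub))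
          (hkt.mul_continuousOn hprim) fun s hs ↦ (le_abs_self _).trans ?_
        have hsb := hsub hs
        refine abs_sum_mul_le (hAk i s hsb) ((hV i s hsb).1.trans (ih i s hsb)) fun j _ ↦ ?_
        rw [abs_of_nonneg (hV j s hsb).1]
        exact ih j s hsb
      _ = C / n ! * ∫ s in a..t, k s * (∫ r in a..s, k r) ^ n := by
        rw [← intervalIntegral.integral_const_mul]
        congr with s
        ring
      _ = C * (∫ s in a..t, k s) ^ (n + 1) / (n + 1)! := by
        rw [integral_mul_primitive_pow hkt, Nat.factorial_succ]
        push_cast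
        field_simp

theorem gronwall_countable_system_general
    (hA_meas : ∀ i, ∀ j ∈ N i, AEStronglyMeasurable (A i j) (volume.restrict (Icc a b)))
    (hk : IntegrableOn k (Icc a b)) (hAk : ∀ i, ∀ s ∈ Icc a b, ∑ j ∈ N i, |A i j s| ≤ k s)
    (hV_meas : ∀ i, AEStronglyMeasurable (V i) (volume.restrict (Icc a b)))
    (hV : ∀ i, ∀ t ∈ Icc a b, V i t ∈ Icc 0 C)
    (h : ∀ i, ∀ t ∈ Icc a b, V i t ≤ ∫ s in a..t, ∑ j ∈ N i, A i j s * V j s) :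
    ∀ i, ∀ t ∈ Icc a b, V i t = 0 := by
  intro i t ht
  have hC : 0 ≤ C := (hV i t ht).1.trans (hV i t ht).2
  have hAV (i : ι) : IntegrableOn (fun s ↦ ∑ j ∈ N i, A i j s * V j s) (Icc a b) :=
    integrable_sum_mul hk hC (hA_meas i) (fun j _ ↦ hV_meas j)
      (ae_restrict_of_forall_mem measurableSet_Icc (hAk i))
      (ae_restrict_of_forall_mem measurableSet_Icc fun s hs j _ ↦
        (abs_of_nonneg (hV j s hs).1).trans_le (hV j s hs).2)
  have hlim : Tendsto (fun n : ℕ ↦ C * (∫ s in a..t, k s) ^ n / n !) atTop (𝓝 0) := by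
    simpa only [mul_div_assoc, mul_zero] using
      (FloorSemiring.tendsto_pow_div_factorial_atTop (∫ s in a..t, k s)).const_mul C
  exact le_antisymm
    (ge_of_tendsto' hlim fun n ↦ le_mul_primitive_pow_div_factorial hk hAk hV hAV h n i t ht)
    (hV i t ht).1

theorem eq_zero_of_le_integral_mul_sum {c : ℝ → ℝ} {m : ℕ} (hN : ∀ i, (N i).card ≤ m)
    (hc : IntegrableOn c (Icc a b))
    (hV_meas : ∀ i, AEStronglyMeasurable (V i) (volume.restrict (Icc a b)))
    (hV : ∀ i, ∀ t ∈ Icc a b, V i t ∈ Icc 0 C)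
    (h : ∀ i, ∀ t ∈ Icc a b, V i t ≤ ∫ s in a..t, c s * ∑ j ∈ N i, V j s) :
    ∀ i, ∀ t ∈ Icc a b, V i t = 0 := by
  refine gronwall_countable_system_general (A := fun _ _ ↦ c)
    (fun _ _ _ ↦ hc.aestronglyMeasurable) (hc.abs.const_mul m) (fun i s _ ↦ ?_) hV_meas hV
    (by simpa only [Finset.mul_sum] using h)
  rw [Finset.sum_const, nsmul_eq_mul]
  gcongr
  exact hN i

end LinearSystem

/-- Gronwall-type lemma for the countable coupled system of inequalities arising in the
uniqueness proof of the hydrodynamic PDE: the functions `V ℓ` must vanish identically. -/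
theorem gronwall_countable_system
    (lam : ℝ → ℝ) (K : ℝ) (V : ℕ → ℝ → ℝ)
    (hK : 0 ≤ K)
    (hlam_nonneg : ∀ t ≥ (0:ℝ), 0 ≤ lam t)
    (hlam_loc : ∀ T : ℝ, IntegrableOn lam (Icc 0 T))
    (hV_meas : ∀ ℓ ≥ 1, Measurable (V ℓ))
    (hV_range : ∀ ℓ ≥ 1, ∀ t ≥ (0:ℝ), V ℓ t ∈ Icc (0:ℝ) 2)
    (h_one : ∀ t ≥ (0:ℝ),
      V 1 t ≤ K * ∫ s in (0:ℝ)..t, (1 + lam s) * (V 1 s + V 2 s))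
    (h_ell : ∀ ℓ ≥ 2, ∀ t ≥ (0:ℝ),
      V ℓ t ≤ K * ∫ s in (0:ℝ)..t, (1 + lam s) * (V (ℓ - 1) s + V ℓ s + V (ℓ + 1) s)) :
    ∀ ℓ ≥ 1, ∀ t ≥ (0:ℝ), V ℓ t = 0 := by
  intro ℓ hℓ T hT
  obtain ⟨n, rfl⟩ := Nat.exists_eq_add_of_le' hℓ
  have hcoeff : IntegrableOn (fun s ↦ K * (1 + lam s)) (Icc 0 T) :=
    ((integrableOn_const (by simp)).add (hlam_loc T)).const_mul K
  -- Truncated subtraction makes `Finset.Icc (n - 1) (n + 1)` equal to `{0, 1}` in the first row.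
  refine eq_zero_of_le_integral_mul_sum (V := fun n ↦ V (n + 1)) (m := 3)
    (N := fun n ↦ Finset.Icc (n - 1) (n + 1)) (fun n ↦ by rw [Nat.card_Icc]; omega) hcoeff
    (fun n ↦ (hV_meas (n + 1) n.succ_pos).aestronglyMeasurable)
    (fun n t ht ↦ hV_range (n + 1) n.succ_pos t ht.1) ?_ n T ⟨hT, le_rfl⟩
  simp only [mul_assoc, intervalIntegral.integral_const_mul]
  rintro (_ | n) t ht
  · simpa [Finset.sum_Icc_succ_top] using h_one t ht.1
  · simpa [Finset.sum_Icc_succ_top, add_assoc] using h_ell (n + 2) (Nat.le_add_left 2 n) t ht.1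
end

section
/- Routing probability under SQ(2): let N ≥ 1, let X: Fin N → ℕ, and for ℓ ∈ ℕ let s(ℓ) = card{i : X(i) ≥ ℓ}. Equip Ω = Fin N × Fin N × Bool with the uniform probability measure, and define the routing map κ: Ω → Fin N by κ(i₁, i₂, b) = i₁ if X(i₁) < X(i₂), κ(i₁, i₂, b) = i₂ if X(i₂) < X(i₁), and, in case of a tie X(i₁) = X(i₂), κ(i₁, i₂, b) = i₁ if b = true and i₂ if b = false. Then for every server i with X(i) = ℓ, the probability of the event {κ = i} equals (s(ℓ) + s(ℓ+1))/N². -/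
open MeasureTheory

/-!
Condition on the tie-breaking bit. When ties go to the first sample, the job is routed to `i`
exactly when the sample is `(i, j)` with `X i ≤ X j` or `(j, i)` with `X i < X j`, and these two
families of pairs are disjoint. Exchanging the two samples while flipping the bit does not change
the destination, so the other value of the bit gives the same count.
-/

open scoped Finset

section Routing

variable {ι α : Type*} [LinearOrder α] (X : ι → α)

/-- The destination chosen by SQ(2), where `X` gives the queue lengths and `ω` consists of the first
sampled queue, the second one and the tie-breaking bit; `true` favours the first sample. -/
def sq2Route (ω : ι × ι × Bool) : ι :=
  if X ω.1 < X ω.2.1 then ω.1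
  else if X ω.2.1 < X ω.1 then ω.2.1
  else if ω.2.2 then ω.1 else ω.2.1

theorem sq2Route_swap_not (i₁ i₂ : ι) (b : Bool) :
    sq2Route X (i₂, i₁, !b) = sq2Route X (i₁, i₂, b) := by
  obtain h | h | h := lt_trichotomy (X i₁) (X i₂)
  · simp [sq2Route, h, h.not_gt]
  · cases b <;> simp [sq2Route, h]
  · simp [sq2Route, h, h.not_gt]

theorem sq2Route_true (i₁ i₂ : ι) :
    sq2Route X (i₁, i₂, true) = if X i₁ ≤ X i₂ then i₁ else i₂ := by
  obtain h | h | h := lt_trichotomy (X i₁) (X i₂)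
  · simp [sq2Route, h, h.le]
  · simp [sq2Route, h]
  · simp [sq2Route, h, h.not_gt]

theorem sq2Route_true_eq_iff {i₁ i₂ i : ι} :
    sq2Route X (i₁, i₂, true) = i ↔ i₁ = i ∧ X i ≤ X i₂ ∨ X i < X i₁ ∧ i₂ = i := by
  grind [sq2Route_true]

variable [Fintype ι]

theorem card_filter_sq2Route_true [DecidableEq ι] (i : ι) :
    #{p : ι × ι | sq2Route X (p.1, p.2, true) = i} = #{j | X i ≤ X j} + #{j | X i < X j} := by
  have hdisj : Disjoint (({i} : Finset ι) ×ˢ ({j | X i ≤ X j} : Finset ι))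
      (({j | X i < X j} : Finset ι) ×ˢ {i}) :=
    Finset.disjoint_product.mpr (.inl (by simp))
  have hunion : ({p : ι × ι | sq2Route X (p.1, p.2, true) = i} : Finset (ι × ι)) =
      (({i} : Finset ι) ×ˢ ({j | X i ≤ X j} : Finset ι)).disjUnion
        (({j | X i < X j} : Finset ι) ×ˢ {i}) hdisj := by
    ext ⟨i₁, i₂⟩
    simp only [Finset.mem_filter_univ, sq2Route_true_eq_iff, Finset.mem_disjUnion,
      Finset.mem_product, Finset.mem_singleton]
  rw [hunion, Finset.card_disjUnion, Finset.card_product, Finset.card_product,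
    Finset.card_singleton, one_mul, mul_one]

theorem card_filter_sq2Route_bit [DecidableEq ι] (i : ι) (b : Bool) :
    #{p : ι × ι | sq2Route X (p.1, p.2, b) = i} = #{j | X i ≤ X j} + #{j | X i < X j} := by
  cases b with
  | true => exact card_filter_sq2Route_true X i
  | false =>
    rw [← card_filter_sq2Route_true X i]
    refine Finset.card_equiv (Equiv.prodComm ι ι) fun p ↦ ?_
    simp [← sq2Route_swap_not X p.1 p.2 false]

theorem card_filter_sq2Route [DecidableEq ι] (i : ι) :
    #{ω | sq2Route X ω = i} = 2 * (#{j | X i ≤ X j} + #{j | X i < X j}) :=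
  calc #{ω | sq2Route X ω = i}
    _ = ∑ b : Bool, #{p : ι × ι | sq2Route X (p.1, p.2, b) = i} := by
      simp only [Finset.card_filter, Fintype.sum_prod_type, Fintype.sum_bool,
        Finset.sum_add_distrib]
    _ = 2 * (#{j | X i ≤ X j} + #{j | X i < X j}) := by
      simp [card_filter_sq2Route_bit]

theorem sq2_routing_probability_general [Nonempty ι] [MeasurableSpace ι]
    [MeasurableSingletonClass ι] (i : ι) :
    (PMF.uniformOfFintype (ι × ι × Bool)).toMeasure {ω | sq2Route X ω = i} =
      ((#{j | X i ≤ X j} : ENNReal) + #{j | X i < X j}) / (Fintype.card ι : ENNReal) ^ 2 := by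
  classical
  have hΩ : Fintype.card (ι × ι × Bool) = 2 * Fintype.card ι ^ 2 := by
    rw [Fintype.card_prod, Fintype.card_prod, Fintype.card_bool]
    ring
  have hroute : Fintype.card {ω | sq2Route X ω = i} = 2 * (#{j | X i ≤ X j} + #{j | X i < X j}) :=
    (Fintype.card_subtype _).trans (card_filter_sq2Route X i)
  rw [PMF.toMeasure_uniformOfFintype_apply _ (Set.toFinite _).measurableSet, hroute, hΩ]
  push_cast
  exact ENNReal.mul_div_mul_left _ _ two_ne_zero ENNReal.ofNat_ne_top

end Routing

/-- Routing probability under SQ(2): sample two queues independently and uniformly at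
random (with a uniform tie-breaking bit); for a server `i` of queue length `ℓ`, the
probability that the arriving job is routed to `i` is `(s ℓ + s (ℓ+1)) / N²`. -/
theorem sq2_routing_probability
    (N : ℕ) [NeZero N] (X : Fin N → ℕ) (s : ℕ → ℕ)
    (hs : ∀ ℓ : ℕ, s ℓ = (Finset.univ.filter fun i : Fin N => ℓ ≤ X i).card)
    (κ : Fin N × Fin N × Bool → Fin N)
    (hκ : ∀ (i₁ i₂ : Fin N) (b : Bool),
      κ (i₁, i₂, b) =
        if X i₁ < X i₂ then i₁
        else if X i₂ < X i₁ then i₂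
        else if b then i₁ else i₂)
    (i : Fin N) (ℓ : ℕ) (hi : X i = ℓ) :
    (PMF.uniformOfFintype (Fin N × Fin N × Bool)).toMeasure {ω | κ ω = i}
      = ((s ℓ : ENNReal) + (s (ℓ + 1) : ENNReal)) / (N : ENNReal) ^ 2 := by
  obtain rfl : κ = sq2Route X := funext fun ω ↦ hκ ω.1 ω.2.1 ω.2.2
  simpa [hs, hi, Order.add_one_le_iff] using sq2_routing_probability_general X i
end
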